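/- arXiv:1710.00280 — 2 statements merged into one kernel-verified Lean document; each statement's English description precedes it below -/
import Mathlib

section
/- Let A and B be bounded convex open sets in ℝⁿ, n ≥ 2, with the closure of B contained in A. Let u be harmonic on A \ closure(B), continuous on the closure of A \ closure(B), with u ≡ 1 on the frontier of B and u ≡ 0 on the frontier of A. Then for every c ∈ (0,1), the set {x ∈ A \ closure(B) : u(x) ≥ c} ∪ closure(B) is convex. -/
/-!
Extend `u` by `1` to `closure B`, calling the extension `w`; it is continuous on `closure A`, and
the claim is the quasiconcavity `min (w x) (w y) ≤ w (a x + b y)` for fixed `a, b > 0`,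
`a + b = 1` (`RingPotential.quasiconcave`). If it fails, then for small `ε > 0` the function
`(x, y) ↦ w z - ε ‖z‖² - min (w x) (w y)`, `z = a x + b y`, attains a minimum over
`closure A × closure A` at a point with `w z < min (w x) (w y)`. There `x, y ∈ A`, and `z` lies in
the open ring `A \ closure B`.

* If `w x ≠ w y`, moving only the point with the larger value shows that `u - ε ‖·‖²`, whose
  Laplacian is negative, has a local minimum at `z`, which is absurd.
* If `w x = w y`, then `x` and `y` are in the open ring too, because `u < 1` there, and
  `two_point` applies. The first-order conditions make the differentials of `u - ε ‖·‖²` at `z`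
  and of `u` at `x` and `y` proportional, with factors `α, β` satisfying `a α + b β = 1`. Moving
  `x` and `y` along parabolas with velocities `α e` and `β e`, whose accelerations cancel the
  second-order terms of `u` at `x` and `y`, gives
  `a α³ D²u(x)(e, e) + b β³ D²u(y)(e, e) ≤ D²(u - ε ‖·‖²)(z)(e, e)`. Summing over an orthonormal
  basis, the left side is `0` and the right side is negative.

The second case needs `∇u ≠ 0` at `x` and `y`. This is `RingPotential.fderiv_ne_zero`: by the weak
maximum principle, dilating by a factor `t > 1` about a point of `B` multiplies the value of `u`
by at most `1 - κ (t - 1)`, with a constant `κ > 0`. The affine barriers of `RingPotential.barrier`,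
built from supporting hyperplanes of `B`, provide this estimate on the boundary of `B`, and also
the bound `u < 1`. Second-order information is handled throughout by expansions of real functions
of one variable (`Jet`), so that only `C²` regularity of `u` enters.
-/
open Set Filter Topology Asymptotics

/-! ### Second-order expansions in one variable -/

/-- `g` has the expansion `g t = g 0 + p t + (q / 2) t² + o(t²)` at `0`; thus `q` plays the role of
the second derivative. -/
def Jet (g : ℝ → ℝ) (p q : ℝ) : Prop :=
  (fun t => g t - g 0 - p * t - q / 2 * t ^ 2) =o[𝓝 0] fun t => t ^ 2

namespace Jet
variable {g h : ℝ → ℝ} {p q p' q' : ℝ}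

theorem add (hg : Jet g p q) (hh : Jet h p' q') : Jet (fun t => g t + h t) (p + p') (q + q') := by
  refine (IsLittleO.add hg hh).congr_left fun t => ?_
  ring

theorem const_mul (c : ℝ) (hg : Jet g p q) : Jet (fun t => c * g t) (c * p) (c * q) := by
  refine (IsLittleO.const_mul_left hg c).congr_left fun t => ?_
  ring

theorem sub (hg : Jet g p q) (hh : Jet h p' q') : Jet (fun t => g t - h t) (p - p') (q - q') := by
  refine (IsLittleO.sub hg hh).congr_left fun t => ?_
  ring

theorem of_eq (a : ℝ) (hg : ∀ t, g t = a + p * t + q / 2 * t ^ 2) : Jet g p q := by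
  refine (isLittleO_zero (fun t : ℝ => t ^ 2) (𝓝 0)).congr_left fun t => ?_
  rw [hg t, hg 0]; ring

theorem comp_mul (c : ℝ) (hg : Jet g p q) : Jet (fun t => g (c * t)) (c * p) (c ^ 2 * q) := by
  have h1 : Tendsto (fun t : ℝ => c * t) (𝓝 0) (𝓝 0) := by
    have : Continuous (fun t : ℝ => c * t) := by fun_prop
    simpa using this.tendsto 0
  have h2 : (fun t : ℝ => (c * t) ^ 2) =O[𝓝 0] fun t => t ^ 2 := by
    refine (isBigO_const_mul_self (c ^ 2) (fun t : ℝ => t ^ 2) (𝓝 0)).congr_left fun t => ?_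
    ring
  refine ((IsLittleO.comp_tendsto hg h1).trans_isBigO h2).congr_left fun t => ?_
  simp only [Function.comp_apply, mul_zero]; ring

/-- A function with a positive first-order coefficient, or with a vanishing one and a positive
second-order coefficient, increases strictly to the right of `0`. -/
theorem eventually_gt (hg : Jet g p q) (hpq : 0 < p ∨ p = 0 ∧ 0 < q) :
    ∀ᶠ t in 𝓝[>] 0, g 0 < g t := by
  have hpos : ∀ᶠ t : ℝ in 𝓝[>] 0, 0 < t := self_mem_nhdsWithin
  rcases hpq with hp | ⟨rfl, hq⟩
  · have h1 := (hg.def (c := 1) one_pos).filter_mono (nhdsWithin_le_nhds (s := Ioi 0))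
    have h2 : ∀ᶠ t : ℝ in 𝓝[>] 0, 0 < p + (q / 2 - 1) * t := by
      have : Continuous (fun t : ℝ => p + (q / 2 - 1) * t) := by fun_prop
      have := this.tendsto 0
      simp only [mul_zero, add_zero] at this
      exact (this.eventually (lt_mem_nhds hp)).filter_mono nhdsWithin_le_nhds
    filter_upwards [hpos, h1, h2] with t ht h1 h2
    rw [Real.norm_eq_abs, Real.norm_eq_abs, abs_of_nonneg (sq_nonneg t)] at h1
    nlinarith [(abs_le.1 h1).1, mul_pos ht h2]
  · have h1 := (hg.def (c := q / 4) (by positivity)).filter_mono (nhdsWithin_le_nhds (s := Ioi 0))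
    filter_upwards [hpos, h1] with t ht h1
    rw [Real.norm_eq_abs, Real.norm_eq_abs, abs_of_nonneg (sq_nonneg t)] at h1
    nlinarith [(abs_le.1 h1).1, mul_pos hq (pow_pos ht 2)]

theorem nonpos_of_isLocalMax (hg : Jet g p q) (hmax : ∀ᶠ t in 𝓝 0, g t ≤ g 0) : q ≤ 0 := by
  by_contra! hq
  -- Symmetrizing `g` removes the first-order term.
  have h1 := (hg.add (hg.comp_mul (-1))).eventually_gt (Or.inr ⟨by ring, by linarith⟩)
  have h2 : Tendsto (fun t : ℝ => -1 * t) (𝓝 0) (𝓝 0) := by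
    have : Continuous (fun t : ℝ => -1 * t) := by fun_prop
    simpa using this.tendsto 0
  obtain ⟨t, h3, h4, h5⟩ := (h1.and ((hmax.and (h2.eventually hmax)).filter_mono
    nhdsWithin_le_nhds)).exists
  simp only [mul_zero] at h3
  linarith

theorem snd_unique (hg : Jet g p q) (hg' : Jet g p' q') : q = q' := by
  have h1 := (hg.sub hg').nonpos_of_isLocalMax (by simp)
  have h2 := (hg'.sub hg).nonpos_of_isLocalMax (by simp)
  linarith

/-- Taylor's formula: it is enough that the derivative of `g` is differentiable at `0`. -/
theorem of_hasDerivAt {g' : ℝ → ℝ} (h1 : ∀ᶠ t in 𝓝 0, HasDerivAt g (g' t) t)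
    (h2 : HasDerivAt g' q 0) : Jet g (g' 0) q := by
  obtain ⟨δ, hδ, hball⟩ := Metric.eventually_nhds_iff_ball.1 h1
  have h0 : (0 : ℝ) ∈ Metric.ball (0 : ℝ) δ := Metric.mem_ball_self hδ
  have hlin : (fun t => g' t - g' 0 - q * t) =o[𝓝[Metric.ball 0 δ] 0] fun t => (t - 0) ^ 1 := by
    refine IsLittleO.mono ?_ nhdsWithin_le_nhds
    refine (hasDerivAt_iff_isLittleO.1 h2).congr (fun t => ?_) (fun t => ?_)
    · simp [mul_comm]
    · ring
  have := Convex.isLittleO_pow_succ_real (convex_ball (0 : ℝ) δ) h0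
    (f := fun t => g t - g' 0 * t - q / 2 * t ^ 2) (f' := fun t => g' t - g' 0 - q * t)
    (n := 1) (fun t ht => ?_) hlin
  · rw [Metric.isOpen_ball.nhdsWithin_eq h0] at this
    refine this.congr (fun t => ?_) (fun t => ?_) <;> ring
  · refine HasDerivAt.hasDerivWithinAt ?_
    have := ((hball t ht).sub ((hasDerivAt_id t).const_mul (g' 0))).sub
      (((hasDerivAt_id t).pow 2).const_mul (q / 2))
    refine HasDerivAt.congr_deriv (f := fun t => g t - g' 0 * t - q / 2 * t ^ 2) this ?_
    simp; ring

end Jet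

section
variable {E : Type*} [NormedAddCommGroup E] [NormedSpace ℝ E]

/-- Expansion of a `C²` function along the parabola `t ↦ x + t a + t² b`. -/
theorem jet_curve {f : E → ℝ} {x : E} (hf : ContDiffAt ℝ 2 f x) (a b : E) :
    Jet (fun t => f (x + t • a + t ^ 2 • b)) (fderiv ℝ f x a)
      (fderiv ℝ (fderiv ℝ f) x a a + 2 * fderiv ℝ f x b) := by
  have hc : ∀ t : ℝ, HasDerivAt (fun t : ℝ => x + t • a + t ^ 2 • b) (a + (2 * t) • b) t := by
    intro t
    have h1 : HasDerivAt (fun t : ℝ => t • a) a t := by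
      simpa using (hasDerivAt_id t).smul_const a
    have h2 : HasDerivAt (fun t : ℝ => t ^ 2 • b) ((2 * t) • b) t := by
      simpa using (hasDerivAt_pow 2 t).smul_const b
    exact (h1.const_add x).add h2
  have hct : Tendsto (fun t : ℝ => x + t • a + t ^ 2 • b) (𝓝 0) (𝓝 x) := by
    simpa using (hc 0).continuousAt.tendsto
  have hd : ∀ᶠ y in 𝓝 x, DifferentiableAt ℝ f y := by
    filter_upwards [hf.eventually (by simp)] with y hy
    exact hy.differentiableAt (by norm_num)
  have h1 : ∀ᶠ t : ℝ in 𝓝 0, HasDerivAt (fun t : ℝ => f (x + t • a + t ^ 2 • b))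
      (fderiv ℝ f (x + t • a + t ^ 2 • b) (a + (2 * t) • b)) t := by
    filter_upwards [hct.eventually hd] with t ht
    exact ht.hasFDerivAt.comp_hasDerivAt t (hc t)
  have hd2 : DifferentiableAt ℝ (fderiv ℝ f) x :=
    (hf.fderiv_right (m := 1) (by norm_num)).differentiableAt (by norm_num)
  have hx0 : x + (0 : ℝ) • a + (0 : ℝ) ^ 2 • b = x := by simp
  have h2 : HasDerivAt (fun t : ℝ => fderiv ℝ f (x + t • a + t ^ 2 • b) (a + (2 * t) • b))
      (fderiv ℝ (fderiv ℝ f) x a a + 2 * fderiv ℝ f x b) 0 := by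
    have h3 : HasDerivAt (fun t : ℝ => fderiv ℝ f (x + t • a + t ^ 2 • b))
        (fderiv ℝ (fderiv ℝ f) x a) 0 := by
      have := hc 0
      simp only [mul_zero, zero_smul, add_zero] at this
      refine HasFDerivAt.comp_hasDerivAt (x := (0:ℝ)) ?_ this
      rw [hx0]; exact hd2.hasFDerivAt
    have h4 : HasDerivAt (fun t : ℝ => a + (2 * t) • b) ((2 : ℝ) • b) 0 := by
      simpa using (((hasDerivAt_id (0 : ℝ)).const_mul 2).smul_const b).const_add a
    simpa using h3.clm_apply h4
  simpa using Jet.of_hasDerivAt h1 h2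

end

/-! ### Second-order analysis at a minimum of the two-point function -/

section TwoPoint
variable {E : Type*} [NormedAddCommGroup E] [NormedSpace ℝ E]

theorem curve_tendsto (a b c d : E) :
    Tendsto (fun t : ℝ => (t • a + t ^ 2 • b, t • c + t ^ 2 • d)) (𝓝[>] 0) (𝓝 ((0 : E), (0 : E))) := by
  have : Continuous (fun t : ℝ => (t • a + t ^ 2 • b, t • c + t ^ 2 • d)) := by fun_prop
  have := this.tendsto 0
  simp only [zero_smul, ne_eq, OfNat.ofNat_ne_zero, not_false_eq_true, zero_pow, add_zero] at this
  exact this.mono_left nhdsWithin_le_nhds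

/-- The function `(v₁, v₂) ↦ f (z + l v₁ + m v₂) - min (g (x + v₁) - g x) (h (y + v₂) - h y)` has
no local minimum at the origin when `g` and `h` are harmonic and noncritical at `x` and `y` and `f`
is strictly superharmonic at `z`; the family `e` is the one over which Laplacians are summed. -/
theorem two_point {ι : Type*} [Fintype ι] (e : ι → E) {f g h : E → ℝ} {x y z : E} {l m : ℝ}
    (hl : 0 < l) (hm : 0 < m)
    (hf : ContDiffAt ℝ 2 f z) (hg : ContDiffAt ℝ 2 g x) (hh : ContDiffAt ℝ 2 h y)
    (hg1 : fderiv ℝ g x ≠ 0) (hh1 : fderiv ℝ h y ≠ 0)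
    (hf2 : ∑ i, fderiv ℝ (fderiv ℝ f) z (e i) (e i) < 0)
    (hg2 : ∑ i, fderiv ℝ (fderiv ℝ g) x (e i) (e i) = 0)
    (hh2 : ∑ i, fderiv ℝ (fderiv ℝ h) y (e i) (e i) = 0)
    (hmin : ∀ᶠ v : E × E in 𝓝 (0, 0), min (g (x + v.1) - g x) (h (y + v.2) - h y) ≤
      f (z + (l • v.1 + m • v.2)) - f z) : False := by
  set P := fderiv ℝ g x with hP
  set R := fderiv ℝ h y with hR
  set G := fderiv ℝ f z with hG
  -- Both steps below test minimality along a pair of parabolas.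
  have key : ∀ (a b c d : E),
      ¬ ((0 < P a - G (l • a + m • c) ∨ P a - G (l • a + m • c) = 0 ∧
            0 < (fderiv ℝ (fderiv ℝ g) x a a + 2 * P b) -
              (fderiv ℝ (fderiv ℝ f) z (l • a + m • c) (l • a + m • c)
                + 2 * G (l • b + m • d))) ∧
          (0 < R c - G (l • a + m • c) ∨ R c - G (l • a + m • c) = 0 ∧
            0 < (fderiv ℝ (fderiv ℝ h) y c c + 2 * R d) -
              (fderiv ℝ (fderiv ℝ f) z (l • a + m • c) (l • a + m • c)
                + 2 * G (l • b + m • d)))) := by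
    rintro a b c d ⟨h1, h2⟩
    have jf := jet_curve hf (l • a + m • c) (l • b + m • d)
    have e1 := ((jet_curve hg a b).sub jf).eventually_gt h1
    have e2 := ((jet_curve hh c d).sub jf).eventually_gt h2
    obtain ⟨t, h1, h2, h3⟩ := (e1.and (e2.and ((curve_tendsto a b c d).eventually hmin))).exists
    simp only [zero_smul, ne_eq, OfNat.ofNat_ne_zero, not_false_eq_true, zero_pow, add_zero] at h1 h2
    have hz : z + (l • (t • a + t ^ 2 • b) + m • (t • c + t ^ 2 • d)) =
        z + t • (l • a + m • c) + t ^ 2 • (l • b + m • d) := by module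
    simp only [hz, ← add_assoc] at h3
    rcases min_le_iff.1 h3 with h3 | h3 <;> linarith
  have first : ∀ a c : E, P a ≤ G (l • a + m • c) ∨ R c ≤ G (l • a + m • c) := by
    intro a c
    by_contra! hcon
    exact key a 0 c 0 ⟨Or.inl (by linarith [hcon.1]), Or.inl (by linarith [hcon.2])⟩
  obtain ⟨v, hv⟩ : ∃ v, P v = 1 := by
    obtain ⟨v, hv⟩ : ∃ v, P v ≠ 0 := by
      by_contra! hcon
      exact hg1 (ContinuousLinearMap.ext hcon)
    exact ⟨(P v)⁻¹ • v, by simp [hv]⟩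
  obtain ⟨w, hw⟩ : ∃ w, R w = 1 := by
    obtain ⟨w, hw⟩ : ∃ w, R w ≠ 0 := by
      by_contra! hcon
      exact hh1 (ContinuousLinearMap.ext hcon)
    exact ⟨(R w)⁻¹ • w, by simp [hw]⟩
  -- `G` vanishes on the kernel of `P`, and likewise on that of `R`, hence is a multiple of each.
  have hGP : ∀ a, G a = P a * G v := by
    have hker : ∀ a, P a = 0 → 0 ≤ G a := by
      intro a ha
      have := first a 0
      simp only [smul_zero, add_zero, map_zero, map_smul, smul_eq_mul, ha, or_self] at this
      exact nonneg_of_mul_nonneg_right this hl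
    intro a
    have h1 := hker (a - P a • v) (by simp [hv])
    have h2 := hker (-(a - P a • v)) (by simp [hv])
    simp only [map_neg, map_sub, map_smul, smul_eq_mul] at h1 h2
    linarith
  have hGR : ∀ a, G a = R a * G w := by
    have hker : ∀ a, R a = 0 → 0 ≤ G a := by
      intro a ha
      have := first 0 a
      simp only [smul_zero, zero_add, map_zero, map_smul, smul_eq_mul, ha, or_self] at this
      exact nonneg_of_mul_nonneg_right this hm
    intro a
    have h1 := hker (a - R a • w) (by simp [hw])
    have h2 := hker (-(a - R a • w)) (by simp [hw])
    simp only [map_neg, map_sub, map_smul, smul_eq_mul] at h1 h2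
    linarith
  set α := G v with hα
  set β := G w with hβ
  have hγ : l * α + m * β = 1 := by
    have h1 := first v w
    have h2 := first (-v) (-w)
    simp only [map_add, map_neg, map_smul, smul_eq_mul, hv, hw, smul_neg, ← hα, ← hβ,
      or_self] at h1 h2
    linarith
  have second : ∀ a, l * α ^ 3 * fderiv ℝ (fderiv ℝ g) x a a
      + m * β ^ 3 * fderiv ℝ (fderiv ℝ h) y a a ≤ fderiv ℝ (fderiv ℝ f) z a a := by
    intro a
    by_contra! hcon
    have hz : l • (α • a) + m • (β • a) = a := by
      rw [smul_smul, smul_smul, ← add_smul, hγ, one_smul]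
    -- The quadratic corrections along `v` and `w` cancel the second-order terms of `g` and `h`.
    refine key (α • a) ((-(α ^ 2 * fderiv ℝ (fderiv ℝ g) x a a) / 2) • v)
      (β • a) ((-(β ^ 2 * fderiv ℝ (fderiv ℝ h) y a a) / 2) • w) ?_
    rw [hz]
    simp only [map_add, map_smul, smul_eq_mul, hv, hw, ← hα, ← hβ, smul_apply]
    refine ⟨Or.inr ⟨?_, ?_⟩, Or.inr ⟨?_, ?_⟩⟩
    · rw [hGP a]; ring
    · nlinarith
    · rw [hGR a]; ring
    · nlinarith
  have hsum := Finset.sum_le_sum fun i (_ : i ∈ Finset.univ) => second (e i)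
  rw [Finset.sum_add_distrib, ← Finset.mul_sum, ← Finset.mul_sum, hg2, hh2] at hsum
  linarith
end TwoPoint

/-! ### Weak maximum principle -/

section MaxPrinciple
variable {n : ℕ}

/-- Pointwise harmonicity in a weak form: `f` has second-order expansions at `x` along the
coordinate lines, and the second-order coefficients add up to `0`. This is all the maximum
principle needs, and it is stable under linear combinations and dilations. -/
def HarmPt (f : EuclideanSpace ℝ (Fin n) → ℝ) (x : EuclideanSpace ℝ (Fin n)) : Prop :=
  ∃ p q : Fin n → ℝ,
    (∀ i, Jet (fun t => f (x + t • EuclideanSpace.single i 1)) (p i) (q i)) ∧ ∑ i, q i = 0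

theorem HarmPt.add {f g : EuclideanSpace ℝ (Fin n) → ℝ} {x} (hf : HarmPt f x) (hg : HarmPt g x) :
    HarmPt (fun x => f x + g x) x := by
  obtain ⟨p, q, h1, h2⟩ := hf
  obtain ⟨p', q', h1', h2'⟩ := hg
  exact ⟨_, _, fun i => (h1 i).add (h1' i), by rw [Finset.sum_add_distrib, h2, h2', add_zero]⟩

theorem HarmPt.const_mul {f : EuclideanSpace ℝ (Fin n) → ℝ} {x} (c : ℝ) (hf : HarmPt f x) :
    HarmPt (fun x => c * f x) x := by
  obtain ⟨p, q, h1, h2⟩ := hf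
  exact ⟨_, _, fun i => (h1 i).const_mul c, by rw [← Finset.mul_sum, h2, mul_zero]⟩

theorem HarmPt.affine (L : EuclideanSpace ℝ (Fin n) →L[ℝ] ℝ) (a : ℝ) (x) :
    HarmPt (fun x => L x + a) x := by
  refine ⟨fun i => L (EuclideanSpace.single i 1), 0, fun i => ?_, by simp⟩
  refine Jet.of_eq (L x + a) fun t => ?_
  simp; ring

theorem HarmPt.comp_dilation {f : EuclideanSpace ℝ (Fin n) → ℝ} {x} (o) (t : ℝ)
    (hf : HarmPt f (o + t • (x - o))) : HarmPt (fun x => f (o + t • (x - o))) x := by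
  obtain ⟨p, q, h1, h2⟩ := hf
  refine ⟨fun i => t * p i, fun i => t ^ 2 * q i, fun i => ?_, by
    rw [← Finset.mul_sum, h2, mul_zero]⟩
  convert (h1 i).comp_mul t using 3
  module

theorem harmPt_of_contDiffAt {f : EuclideanSpace ℝ (Fin n) → ℝ} {x} (hf : ContDiffAt ℝ 2 f x)
    (h0 : ∑ i : Fin n, fderiv ℝ (fderiv ℝ f) x (EuclideanSpace.single i 1)
      (EuclideanSpace.single i 1) = 0) : HarmPt f x := by
  refine ⟨fun i => fderiv ℝ f x (EuclideanSpace.single i 1), _, fun i => ?_, h0⟩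
  simpa using jet_curve hf (EuclideanSpace.single i 1) 0

theorem jet_sq (ε : ℝ) (x : EuclideanSpace ℝ (Fin n)) (i : Fin n) :
    Jet (fun t => ε * ‖x + t • EuclideanSpace.single i (1 : ℝ)‖ ^ 2) (2 * ε * x i) (2 * ε) := by
  refine Jet.of_eq (ε * ‖x‖ ^ 2) fun t => ?_
  rw [norm_add_sq_real, norm_smul, inner_smul_right, EuclideanSpace.inner_single_right]
  simp; ring

/-- Weak maximum principle: adding a small multiple of `‖x‖²` makes `f` strictly subharmonic, which
excludes an interior maximum. -/
theorem le_zero_of_frontier (hn : 0 < n) {U : Set (EuclideanSpace ℝ (Fin n))} (hU : IsOpen U)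
    (hb : Bornology.IsBounded U) {f : EuclideanSpace ℝ (Fin n) → ℝ}
    (hf : ContinuousOn f (closure U)) (hh : ∀ x ∈ U, HarmPt f x)
    (h0 : ∀ x ∈ frontier U, f x ≤ 0) : ∀ x ∈ U, f x ≤ 0 := by
  intro x0 hx0
  by_contra! hpos
  obtain ⟨r, hr⟩ := hb.closure.exists_norm_le
  have hr0 : 0 ≤ r := (norm_nonneg _).trans (hr x0 (subset_closure hx0))
  set ε := f x0 / (2 * (r ^ 2 + 1)) with hε
  have hε0 : 0 < ε := by positivity
  have hεr : ε * r ^ 2 < f x0 := by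
    rw [hε, div_mul_eq_mul_div, div_lt_iff₀ (by positivity)]
    nlinarith [mul_pos hpos hpos, mul_nonneg hpos.le (sq_nonneg r)]
  obtain ⟨y, hy, hmax⟩ := hb.isCompact_closure.exists_isMaxOn ⟨x0, subset_closure hx0⟩
    (f := fun x => f x + ε * ‖x‖ ^ 2) (hf.add (by fun_prop))
  have hyU : y ∈ U := by
    by_contra hyU
    have h1 := h0 y (by rw [hU.frontier_eq]; exact ⟨hy, hyU⟩)
    have h2 : f x0 + ε * ‖x0‖ ^ 2 ≤ f y + ε * ‖y‖ ^ 2 := hmax (subset_closure hx0)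
    have h3 : ε * ‖y‖ ^ 2 ≤ ε * r ^ 2 := by gcongr; exact hr y hy
    have h4 : 0 ≤ ε * ‖x0‖ ^ 2 := by positivity
    linarith
  obtain ⟨p, q, h1, h2⟩ := hh y hyU
  have h3 : ∀ i, q i + 2 * ε ≤ 0 := fun i => by
    refine ((h1 i).add (jet_sq ε y i)).nonpos_of_isLocalMax ?_
    have hc : Continuous (fun t : ℝ => y + t • EuclideanSpace.single i (1 : ℝ)) := by fun_prop
    have := hc.tendsto 0
    simp only [zero_smul, add_zero] at this
    filter_upwards [this.eventually (hU.mem_nhds hyU)] with t ht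
    simpa using hmax (subset_closure ht)
  have h4 := Finset.sum_le_sum fun i (_ : i ∈ Finset.univ) => h3 i
  rw [Finset.sum_add_distrib, h2] at h4
  simp at h4
  have : (0 : ℝ) < n := by exact_mod_cast hn
  nlinarith
end MaxPrinciple

/-! ### The potential of a convex ring -/

section Ring
variable {n : ℕ} {A B : Set (EuclideanSpace ℝ (Fin n))} {u : EuclideanSpace ℝ (Fin n) → ℝ}

/-- `u` is the potential of the convex ring `A \ closure B`: harmonic in the ring, equal to `1` on
the inner boundary and to `0` on the outer one. The Laplacian is written with iterated Fréchet
derivatives along the standard basis. -/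
structure RingPotential (A B : Set (EuclideanSpace ℝ (Fin n)))
    (u : EuclideanSpace ℝ (Fin n) → ℝ) : Prop where
  dim_pos : 0 < n
  openA : IsOpen A
  openB : IsOpen B
  bddA : Bornology.IsBounded A
  convA : Convex ℝ A
  convB : Convex ℝ B
  nonemptyB : B.Nonempty
  sub : closure B ⊆ A
  contDiffAt : ∀ x ∈ A \ closure B, ContDiffAt ℝ 2 u x
  laplace : ∀ x ∈ A \ closure B, ∑ i : Fin n,
    fderiv ℝ (fderiv ℝ u) x (EuclideanSpace.single i 1) (EuclideanSpace.single i 1) = 0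
  cont : ContinuousOn u (closure (A \ closure B))
  one_B : ∀ x ∈ frontier B, u x = 1
  zero_A : ∀ x ∈ frontier A, u x = 0

theorem mem_frontier_of_ring (hA : IsOpen A) (hB : IsOpen B) {x : EuclideanSpace ℝ (Fin n)}
    (hx : x ∈ frontier (A \ closure B)) : x ∈ frontier A ∨ x ∈ A ∧ x ∈ frontier B := by
  rw [(hA.sdiff isClosed_closure).frontier_eq] at hx
  rw [hA.frontier_eq, hB.frontier_eq]
  by_cases hxA : x ∈ A
  · refine Or.inr ⟨hxA, ?_, fun hxB => ?_⟩
    · by_contra h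
      exact hx.2 ⟨hxA, h⟩
    · have : closure (A \ closure B) ⊆ Bᶜ :=
        closure_minimal (fun y hy hyB => hy.2 (subset_closure hyB)) hB.isClosed_compl
      exact this hx.1 hxB
  · exact Or.inl ⟨closure_mono sdiff_subset hx.1, hxA⟩

namespace RingPotential

theorem isOpen_ring (H : RingPotential A B u) : IsOpen (A \ closure B) :=
  H.openA.sdiff isClosed_closure

theorem harmPt (H : RingPotential A B u) {x} (hx : x ∈ A \ closure B) : HarmPt u x :=
  harmPt_of_contDiffAt (H.contDiffAt x hx) (H.laplace x hx)

theorem nonneg (H : RingPotential A B u) {x} (hx : x ∈ closure (A \ closure B)) : 0 ≤ u x := by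
  have hfr : ∀ x ∈ frontier (A \ closure B), 0 ≤ u x := fun x hx => by
    rcases mem_frontier_of_ring H.openA H.openB hx with h | h
    · rw [H.zero_A x h]
    · rw [H.one_B x h.2]; exact zero_le_one
  by_cases hxD : x ∈ A \ closure B
  · have := le_zero_of_frontier H.dim_pos H.isOpen_ring (H.bddA.subset sdiff_subset)
      (f := fun x => (-1) * u x) (continuousOn_const.mul H.cont)
      (fun x hx => (H.harmPt hx).const_mul (-1)) (fun x hx => by linarith [hfr x hx]) x hxD
    linarith
  · exact hfr x (by rw [H.isOpen_ring.frontier_eq]; exact ⟨hx, hxD⟩)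

/-- An affine function `L - a` which is nonpositive on `B` and at most `M` on `A` bounds the
potential: `1 - (L - a) / M` dominates the boundary values of `u`. -/
theorem barrier (H : RingPotential A B u) (L : EuclideanSpace ℝ (Fin n) →L[ℝ] ℝ) {a M : ℝ}
    (hM : 0 < M) (hLB : ∀ x ∈ closure B, L x ≤ a) (hLA : ∀ x ∈ closure A, L x - a ≤ M) {x}
    (hx : x ∈ A \ closure B) : u x ≤ 1 - (L x - a) / M := by
  have := le_zero_of_frontier H.dim_pos H.isOpen_ring (H.bddA.subset sdiff_subset)
    (f := fun x => u x + ((1 / M) • L) x + (-a / M - 1))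
    ((H.cont.add (ContinuousLinearMap.continuous _).continuousOn).add continuousOn_const)
    (fun x hx => by
      have := (H.harmPt hx).add (HarmPt.affine ((1 / M) • L) (-a / M - 1) x)
      simpa only [add_assoc] using this)
    (fun x hx => by
      have e : u x + ((1 / M) • L) x + (-a / M - 1) = u x + (L x - a) / M - 1 := by
        simp; ring
      simp only [e]
      rcases mem_frontier_of_ring H.openA H.openB hx with h | h
      · rw [H.zero_A x h]
        have := (div_le_one hM).2 (hLA x h.1)
        linarith
      · rw [H.one_B x h.2]
        have := div_nonpos_of_nonpos_of_nonneg (sub_nonpos.2 (hLB x h.2.1)) hM.le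
        linarith) x hx
  have e : u x + ((1 / M) • L) x + (-a / M - 1) = u x + (L x - a) / M - 1 := by
    simp; ring
  simp only [e] at this
  linarith

theorem lt_one (H : RingPotential A B u) {x} (hx : x ∈ A \ closure B) : u x < 1 := by
  obtain ⟨L, a, h1, h2⟩ := geometric_hahn_banach_closed_point H.convB.closure isClosed_closure hx.2
  obtain ⟨M, hM⟩ := (H.bddA.isCompact_closure.image L.continuous).bddAbove
  have h3 := hM (mem_image_of_mem L (subset_closure hx.1))
  have h4 := H.barrier L (a := a) (M := M - a) (by linarith) (fun x hx => (h1 x hx).le)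
    (fun x hx => by linarith [hM (mem_image_of_mem L hx)]) hx
  have : 0 < (L x - a) / (M - a) := div_pos (by linarith) (by linarith)
  linarith

/-- Strict radial decay. The factor `r / d` compares a ball of radius `r` about `o` inside `B` with
a strict upper bound `d` for the distances between points of `closure A`. The proof compares `u` with
its dilate on the smaller ring `σ⁻¹ A \ closure B`, where `σ` is the dilation by `t` about `o`. -/
theorem dilation_le (H : RingPotential A B u) {o : EuclideanSpace ℝ (Fin n)} {r d t : ℝ}
    (hr : 0 < r) (hball : Metric.ball o r ⊆ B) (hd : 0 < d)
    (hdiam : ∀ x ∈ closure A, ∀ y ∈ closure A, ‖y - x‖ < d) (ht : 1 < t)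
    (ht1 : r / d * (t - 1) ≤ 1) {y} (hy : y ∉ closure B) (hyt : o + t • (y - o) ∈ A) :
    u (o + t • (y - o)) ≤ (1 - r / d * (t - 1)) * u y := by
  have hoB : o ∈ B := hball (Metric.mem_ball_self hr)
  have hσ : Continuous (fun x : EuclideanSpace ℝ (Fin n) => o + t • (x - o)) := by fun_prop
  set σ : EuclideanSpace ℝ (Fin n) → EuclideanSpace ℝ (Fin n) := fun x => o + t • (x - o) with hσd
  have hback : ∀ x, x = (1 - t⁻¹) • o + t⁻¹ • σ x := by
    intro x
    have : t ≠ 0 := by positivity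
    simp only [hσd, smul_add, smul_smul, inv_mul_cancel₀ this]
    module
  have hconv : ∀ {S : Set (EuclideanSpace ℝ (Fin n))}, Convex ℝ S → o ∈ S → ∀ x, σ x ∈ S → x ∈ S := by
    intro S hS ho x hx
    rw [hback x]
    exact hS ho hx (by rw [sub_nonneg]; exact inv_le_one_of_one_le₀ ht.le) (by positivity) (by ring)
  have hAt : IsOpen (σ ⁻¹' A) := H.openA.preimage hσ
  have hsub1 : σ ⁻¹' A \ closure B ⊆ A \ closure B := fun x hx =>
    ⟨hconv H.convA (H.sub (subset_closure hoB)) x hx.1, hx.2⟩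
  have hsub2 : ∀ x ∈ σ ⁻¹' A \ closure B, σ x ∈ A \ closure B := fun x hx =>
    ⟨hx.1, fun h => hx.2 (hconv H.convB.closure (subset_closure hoB) x h)⟩
  have hcl : ∀ x ∈ closure (σ ⁻¹' A \ closure B), σ x ∈ closure (A \ closure B) :=
    closure_minimal (fun x hx => subset_closure (hsub2 x hx)) (isClosed_closure.preimage hσ)
  have hfr : ∀ x ∈ frontier (σ ⁻¹' A \ closure B),
      u (σ x) + -(1 - r / d * (t - 1)) * u x ≤ 0 := by
    intro x hx
    have hx' : x ∈ closure (σ ⁻¹' A \ closure B) := frontier_subset_closure hx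
    by_cases hxA : σ x ∈ A
    -- On the inner boundary `u x = 1`, and a supporting hyperplane of `B` at `x` bounds `u (σ x)`.
    · have hxB : x ∈ frontier B := by
        rcases mem_frontier_of_ring hAt H.openB hx with h | h
        · rw [hAt.frontier_eq] at h
          exact absurd hxA h.2
        · exact h.2
      rw [H.one_B x hxB]
      rw [H.openB.frontier_eq] at hxB
      obtain ⟨L, hL⟩ := geometric_hahn_banach_open_point H.convB H.openB hxB.2
      have hLB : ∀ b ∈ closure B, L b ≤ L x :=
        closure_minimal (fun b hb => (hL b hb).le) (isClosed_le L.continuous continuous_const)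
      have hLo : 0 < L x - L o := by linarith [hL o hoB]
      have hLσ : L (σ x) - L x = (t - 1) * (L x - L o) := by
        simp [hσd]; ring
      have hpos : 0 < (t - 1) * (L x - L o) := mul_pos (by linarith) hLo
      have hb := H.barrier L (a := L x) (M := d / r * (L x - L o)) (by positivity) hLB
        (fun y hy => ?_) (x := σ x) ⟨hxA, fun h => by linarith [hLB _ h]⟩
      · rw [hLσ] at hb
        have e : (t - 1) * (L x - L o) / (d / r * (L x - L o)) = r / d * (t - 1) := by
          field_simp
        rw [e] at hb
        linarith
      · -- `B` contains the copy of `A - x` shrunk by the factor `r / d` and centred at `o`.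
        have hxcl : x ∈ closure A := subset_closure (H.sub hxB.1)
        have hmem : o + (r / d) • (y - x) ∈ B := by
          apply hball
          rw [mem_ball_iff_norm, add_sub_cancel_left, norm_smul, Real.norm_of_nonneg (by positivity),
            div_mul_eq_mul_div, div_lt_iff₀ hd]
          exact mul_lt_mul_of_pos_left (hdiam x hxcl y hy) hr
        have := hL _ hmem
        simp only [map_add, map_smul, map_sub, smul_eq_mul] at this
        rw [div_mul_eq_mul_div, le_div_iff₀ hr]
        have h5 : r / d * (L y - L x) < L x - L o := by linarith
        rw [div_mul_eq_mul_div, div_lt_iff₀ hd] at h5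
        linarith
    -- On the outer boundary `u (σ x) = 0`.
    · have h1 : σ x ∈ frontier A := by
        rw [H.openA.frontier_eq]
        exact ⟨closure_mono sdiff_subset (hcl x hx'), hxA⟩
      rw [H.zero_A _ h1]
      have := mul_nonneg (sub_nonneg.2 ht1) (H.nonneg (closure_mono hsub1 hx'))
      linarith
  have := le_zero_of_frontier H.dim_pos (hAt.sdiff isClosed_closure)
    (H.bddA.subset (hsub1.trans sdiff_subset))
    (f := fun x => u (σ x) + -(1 - r / d * (t - 1)) * u x)
    ((H.cont.comp hσ.continuousOn hcl).add
      (continuousOn_const.mul (H.cont.mono (closure_mono hsub1))))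
    (fun x hx => (HarmPt.comp_dilation o t (H.harmPt (hsub2 x hx))).add
      ((H.harmPt (hsub1 hx)).const_mul _)) hfr y ⟨hyt, hy⟩
  linarith

theorem fderiv_ne_zero (H : RingPotential A B u) {y} (hy : y ∈ A \ closure B) (hpos : 0 < u y) :
    fderiv ℝ u y ≠ 0 := by
  intro h0
  obtain ⟨o, ho⟩ := H.nonemptyB
  obtain ⟨r, hr, hball⟩ := Metric.isOpen_iff.1 H.openB o ho
  obtain ⟨d, hd, hdiam⟩ : ∃ d : ℝ, 0 < d ∧ ∀ x ∈ closure A, ∀ y ∈ closure A, ‖y - x‖ < d := by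
    obtain ⟨C, hC⟩ := H.bddA.closure.exists_norm_le
    refine ⟨2 * |C| + 1, by positivity, fun x hx y hy => ?_⟩
    have := norm_sub_le y x
    linarith [hC x hx, hC y hy, le_abs_self C]
  have hκ : 0 < r / d := div_pos hr hd
  have hj := jet_curve (H.contDiffAt y hy) (y - o) 0
  have hlin : Jet (fun s => r / d * u y * s) (r / d * u y) 0 := Jet.of_eq 0 fun s => by ring
  have h1 := (hj.add hlin).eventually_gt (Or.inl (by rw [h0]; simp; positivity))
  have hc : Continuous (fun s : ℝ => y + s • (y - o)) := by fun_prop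
  have h2 : ∀ᶠ s : ℝ in 𝓝[>] 0, y + s • (y - o) ∈ A := by
    have := hc.tendsto 0
    simp only [zero_smul, add_zero] at this
    exact (this.eventually (H.openA.mem_nhds hy.1)).filter_mono nhdsWithin_le_nhds
  have h3 : ∀ᶠ s : ℝ in 𝓝[>] 0, r / d * s < 1 := by
    have hc : Continuous (fun s : ℝ => r / d * s) := by fun_prop
    have := hc.tendsto 0
    rw [mul_zero] at this
    exact (this.eventually (gt_mem_nhds one_pos)).filter_mono nhdsWithin_le_nhds
  obtain ⟨s, h1, h2, h3, hs⟩ := (h1.and (h2.and (h3.and self_mem_nhdsWithin))).exists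
  have hs : 0 < s := hs
  have e : o + (1 + s) • (y - o) = y + s • (y - o) := by module
  have := H.dilation_le (t := 1 + s) hr hball hd hdiam (by linarith) (by
    rw [add_sub_cancel_left]; exact h3.le) hy.2 (by rw [e]; exact h2)
  rw [e] at this
  simp at h1
  linarith

open Classical in
/-- The extension of `u` by the value `1` to `closure B`. -/
noncomputable def ext (B : Set (EuclideanSpace ℝ (Fin n)))
    (u : EuclideanSpace ℝ (Fin n) → ℝ) (x : EuclideanSpace ℝ (Fin n)) : ℝ :=
  if x ∈ closure B then 1 else u x

theorem ext_of_mem {x : EuclideanSpace ℝ (Fin n)} (hx : x ∈ closure B) : ext B u x = 1 := if_pos hx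

theorem ext_of_notMem {x : EuclideanSpace ℝ (Fin n)} (hx : x ∉ closure B) : ext B u x = u x :=
  if_neg hx

theorem ext_eventuallyEq {x : EuclideanSpace ℝ (Fin n)} (hx : x ∉ closure B) :
    ∀ᶠ y in 𝓝 x, ext B u y = u y := by
  filter_upwards [isClosed_closure.isOpen_compl.mem_nhds hx] with y hy using ext_of_notMem hy

theorem closure_subset (A B : Set (EuclideanSpace ℝ (Fin n))) :
    closure A ⊆ closure (A \ closure B) ∪ closure B := by
  refine closure_minimal (fun x hx => ?_) (isClosed_closure.union isClosed_closure)
  by_cases h : x ∈ closure B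
  · exact Or.inr h
  · exact Or.inl (subset_closure ⟨hx, h⟩)

theorem ext_continuousOn (H : RingPotential A B u) : ContinuousOn (ext B u) (closure A) := by
  refine ContinuousOn.mono ?_ (closure_subset A B)
  refine ContinuousOn.union_of_isClosed ?_ ?_ isClosed_closure isClosed_closure
  · refine H.cont.congr fun x hx => ?_
    by_cases h : x ∈ closure B
    · rw [ext_of_mem h]
      have hxfr : x ∈ frontier (A \ closure B) := by
        rw [H.isOpen_ring.frontier_eq]
        exact ⟨hx, fun h' => h'.2 h⟩
      rcases mem_frontier_of_ring H.openA H.openB hxfr with h' | h'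
      · rw [H.openA.frontier_eq] at h'
        exact absurd (H.sub h) h'.2
      · exact (H.one_B x h'.2).symm
    · exact ext_of_notMem h
  · exact continuousOn_const.congr fun x hx => ext_of_mem hx

theorem ext_nonneg (H : RingPotential A B u) {x} (hx : x ∈ closure A) : 0 ≤ ext B u x := by
  by_cases h : x ∈ closure B
  · rw [ext_of_mem h]; exact zero_le_one
  · rw [ext_of_notMem h]
    exact H.nonneg ((closure_subset A B hx).resolve_right h)

theorem ext_le_one (H : RingPotential A B u) {x} (hx : x ∈ A) : ext B u x ≤ 1 := by
  by_cases h : x ∈ closure B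
  · rw [ext_of_mem h]
  · rw [ext_of_notMem h]
    exact (H.lt_one ⟨hx, h⟩).le

theorem contDiffAt_perturb (H : RingPotential A B u) (ε : ℝ) {z} (hz : z ∈ A \ closure B) :
    ContDiffAt ℝ 2 (fun v => u v - ε * ‖v‖ ^ 2) z :=
  (H.contDiffAt z hz).sub (contDiffAt_const.mul (contDiff_norm_sq ℝ).contDiffAt)

theorem laplace_perturb (H : RingPotential A B u) {ε : ℝ} (hε : 0 < ε) {z}
    (hz : z ∈ A \ closure B) :
    ∑ i : Fin n, fderiv ℝ (fderiv ℝ (fun v => u v - ε * ‖v‖ ^ 2)) z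
      (EuclideanSpace.single i 1) (EuclideanSpace.single i 1) < 0 := by
  have h1 : ∀ i : Fin n, fderiv ℝ (fderiv ℝ (fun v => u v - ε * ‖v‖ ^ 2)) z
      (EuclideanSpace.single i 1) (EuclideanSpace.single i 1) =
      fderiv ℝ (fderiv ℝ u) z (EuclideanSpace.single i 1) (EuclideanSpace.single i 1) - 2 * ε := by
    intro i
    have j1 := jet_curve (H.contDiffAt_perturb ε hz) (EuclideanSpace.single i (1 : ℝ)) 0
    have j2 := jet_curve (H.contDiffAt z hz) (EuclideanSpace.single i (1 : ℝ)) 0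
    simp only [smul_zero, add_zero, map_zero, mul_zero] at j1 j2
    exact j1.snd_unique (j2.sub (jet_sq ε z i))
  rw [Finset.sum_congr rfl fun i _ => h1 i, Finset.sum_sub_distrib, H.laplace z hz]
  have : (0 : ℝ) < n := by exact_mod_cast H.dim_pos
  simp; positivity

/-- The strictly superharmonic function `u - ε ‖·‖²` has no local minimum in the ring. The factor
`a` is the weight with which `z = a x + b y` follows a displacement of one endpoint. -/
theorem not_isLocalMin (H : RingPotential A B u) {ε : ℝ} (hε : 0 < ε) {z}
    (hz : z ∈ A \ closure B) {a : ℝ} (ha : 0 < a)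
    (hmin : ∀ᶠ v in 𝓝 (0 : EuclideanSpace ℝ (Fin n)),
      u z - ε * ‖z‖ ^ 2 ≤ u (z + a • v) - ε * ‖z + a • v‖ ^ 2) : False := by
  refine (H.laplace_perturb hε hz).not_ge (Finset.sum_nonneg fun i _ => ?_)
  have j1 := (jet_curve (H.contDiffAt_perturb ε hz) (EuclideanSpace.single i (1 : ℝ)) 0).const_mul (-1)
  have := j1.nonpos_of_isLocalMax (by
    have hc : Continuous (fun t : ℝ => (a⁻¹ * t) • EuclideanSpace.single i (1 : ℝ)) := by fun_prop
    have := hc.tendsto 0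
    simp only [mul_zero, zero_smul] at this
    filter_upwards [this.eventually hmin] with t ht
    rw [smul_smul, ← mul_assoc, mul_inv_cancel₀ ha.ne', one_mul] at ht
    simp only [smul_zero, add_zero, zero_smul]
    linarith)
  simp only [map_zero, mul_zero, add_zero] at this
  linarith

/-- The extended potential is quasiconcave on `A`. -/
theorem quasiconcave (H : RingPotential A B u) {x₀ y₀ : EuclideanSpace ℝ (Fin n)}
    (hx₀ : x₀ ∈ A) (hy₀ : y₀ ∈ A) {a b : ℝ} (ha : 0 < a) (hb : 0 < b) (hab : a + b = 1) :
    min (ext B u x₀) (ext B u y₀) ≤ ext B u (a • x₀ + b • y₀) := by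
  by_contra! hlt
  set w := ext B u with hw
  set δ := min (w x₀) (w y₀) - w (a • x₀ + b • y₀) with hδ
  have hδ0 : 0 < δ := sub_pos.2 hlt
  obtain ⟨r, hr⟩ := H.bddA.closure.exists_norm_le
  set ε := δ / (2 * (r ^ 2 + 1)) with hε
  have hε0 : 0 < ε := by positivity
  have hεr : ε * r ^ 2 < δ := by
    rw [hε, div_mul_eq_mul_div, div_lt_iff₀ (by positivity)]
    nlinarith [mul_nonneg hδ0.le (sq_nonneg r)]
  have hconv := H.convA.closure
  have hwc := H.ext_continuousOn
  have hz : MapsTo (fun p : EuclideanSpace ℝ (Fin n) × EuclideanSpace ℝ (Fin n) =>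
      a • p.1 + b • p.2) (closure A ×ˢ closure A) (closure A) := fun p hp =>
    hconv hp.1 hp.2 ha.le hb.le hab
  have hQ : ContinuousOn (fun p : EuclideanSpace ℝ (Fin n) × EuclideanSpace ℝ (Fin n) =>
      w (a • p.1 + b • p.2) - ε * ‖a • p.1 + b • p.2‖ ^ 2 - min (w p.1) (w p.2))
      (closure A ×ˢ closure A) := by
    refine ((hwc.comp (by fun_prop) hz).sub (by fun_prop)).sub (ContinuousOn.inf ?_ ?_)
    · exact hwc.comp continuousOn_fst fun p hp => hp.1
    · exact hwc.comp continuousOn_snd fun p hp => hp.2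
  obtain ⟨x, hx, y, hy, hmin⟩ : ∃ x ∈ closure A, ∃ y ∈ closure A, ∀ x' ∈ closure A,
      ∀ y' ∈ closure A, w (a • x + b • y) - ε * ‖a • x + b • y‖ ^ 2 - min (w x) (w y) ≤
        w (a • x' + b • y') - ε * ‖a • x' + b • y'‖ ^ 2 - min (w x') (w y') := by
    obtain ⟨p, hp, hmin⟩ :=
      (H.bddA.isCompact_closure.prod H.bddA.isCompact_closure).exists_isMinOn
        ⟨(x₀, y₀), subset_closure hx₀, subset_closure hy₀⟩ hQ
    exact ⟨p.1, hp.1, p.2, hp.2, fun x' hx' y' hy' => isMinOn_iff.1 hmin (x', y') ⟨hx', hy'⟩⟩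
  set z := a • x + b • y with hzd
  have hzA : z ∈ closure A := hconv hx hy ha.le hb.le hab
  have hneg : w z < min (w x) (w y) := by
    have h1 : w z - ε * ‖z‖ ^ 2 - min (w x) (w y) ≤ w (a • x₀ + b • y₀)
        - ε * ‖a • x₀ + b • y₀‖ ^ 2 - min (w x₀) (w y₀) :=
      hmin x₀ (subset_closure hx₀) y₀ (subset_closure hy₀)
    have h2 : ε * ‖z‖ ^ 2 ≤ ε * r ^ 2 := by gcongr; exact hr z hzA
    have h3 : 0 ≤ ε * ‖a • x₀ + b • y₀‖ ^ 2 := by positivity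
    linarith
  have hwz : 0 ≤ w z := H.ext_nonneg hzA
  have hinA : ∀ v ∈ closure A, w z < w v → v ∈ A := by
    intro v hv hlt
    by_contra hvA
    have h1 : w v = u v := ext_of_notMem fun h => hvA (H.sub h)
    rw [h1, H.zero_A v (by rw [H.openA.frontier_eq]; exact ⟨hv, hvA⟩)] at hlt
    linarith
  have hzx : w z < w x := hneg.trans_le (min_le_left _ _)
  have hzy : w z < w y := hneg.trans_le (min_le_right _ _)
  have hxA := hinA x hx hzx
  have hyA := hinA y hy hzy
  have hzA' : z ∈ A := H.convA hxA hyA ha.le hb.le hab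
  have hzB : z ∉ closure B := fun h => by
    have h1 : w z = 1 := ext_of_mem h
    linarith [H.ext_le_one hxA]
  have hzD : z ∈ A \ closure B := ⟨hzA', hzB⟩
  have hwzu : w z = u z := ext_of_notMem hzB
  have c1 : Tendsto (fun v : EuclideanSpace ℝ (Fin n) × EuclideanSpace ℝ (Fin n) => x + v.1)
      (𝓝 (0, 0)) (𝓝 x) := by
    have : Continuous (fun v : EuclideanSpace ℝ (Fin n) × EuclideanSpace ℝ (Fin n) =>
      x + v.1) := by fun_prop
    simpa using this.tendsto (0, 0)
  have c2 : Tendsto (fun v : EuclideanSpace ℝ (Fin n) × EuclideanSpace ℝ (Fin n) => y + v.2)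
      (𝓝 (0, 0)) (𝓝 y) := by
    have : Continuous (fun v : EuclideanSpace ℝ (Fin n) × EuclideanSpace ℝ (Fin n) =>
      y + v.2) := by fun_prop
    simpa using this.tendsto (0, 0)
  have hloc : ∀ᶠ v : EuclideanSpace ℝ (Fin n) × EuclideanSpace ℝ (Fin n) in 𝓝 (0, 0),
      min (w (x + v.1)) (w (y + v.2)) - min (w x) (w y) ≤
        (u (z + (a • v.1 + b • v.2)) - ε * ‖z + (a • v.1 + b • v.2)‖ ^ 2)
          - (u z - ε * ‖z‖ ^ 2) := by
    have c3 : Tendsto (fun v : EuclideanSpace ℝ (Fin n) × EuclideanSpace ℝ (Fin n) =>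
        z + (a • v.1 + b • v.2)) (𝓝 (0, 0)) (𝓝 z) := by
      have : Continuous (fun v : EuclideanSpace ℝ (Fin n) × EuclideanSpace ℝ (Fin n) =>
        z + (a • v.1 + b • v.2)) := by fun_prop
      simpa using this.tendsto (0, 0)
    filter_upwards [c1.eventually (H.openA.mem_nhds hxA), c2.eventually (H.openA.mem_nhds hyA),
      c3.eventually (ext_eventuallyEq (u := u) hzB)] with v h1 h2 h3
    have h4 : w z - ε * ‖z‖ ^ 2 - min (w x) (w y) ≤ w (a • (x + v.1) + b • (y + v.2))
        - ε * ‖a • (x + v.1) + b • (y + v.2)‖ ^ 2 - min (w (x + v.1)) (w (y + v.2)) :=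
      hmin (x + v.1) (subset_closure h1) (y + v.2) (subset_closure h2)
    have e : a • (x + v.1) + b • (y + v.2) = z + (a • v.1 + b • v.2) := by
      rw [hzd]; module
    rw [e, hw, h3, ← hw, hwzu] at h4
    linarith
  have hcx : ∀ p ∈ A, ContinuousAt w p := fun p hp =>
    hwc.continuousAt (Filter.mem_of_superset (H.openA.mem_nhds hp) subset_closure)
  have hcmp : ∀ p ∈ A, ∀ s < w p, ∀ᶠ v in 𝓝 (0 : EuclideanSpace ℝ (Fin n)), s < w (p + v) := by
    intro p hp s hs
    have hc : Continuous (fun v : EuclideanSpace ℝ (Fin n) => p + v) := by fun_prop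
    have := hc.tendsto 0
    rw [add_zero] at this
    exact this.eventually ((hcx p hp).eventually (lt_mem_nhds hs))
  rcases lt_trichotomy (w x) (w y) with hxy | hxy | hxy
  -- Moving `y` alone leaves `min (w x) (w y)` unchanged.
  · refine H.not_isLocalMin hε0 hzD hb ?_
    have ct : Tendsto (fun v : EuclideanSpace ℝ (Fin n) => ((0 : EuclideanSpace ℝ (Fin n)), v))
        (𝓝 0) (𝓝 (0, 0)) := (Continuous.prodMk_right _).tendsto 0
    filter_upwards [ct.eventually hloc, hcmp y hyA _ hxy] with v h1 h2
    simp only [add_zero, smul_zero, zero_add, min_eq_left hxy.le, min_eq_left h2.le] at h1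
    linarith
  · have hxB : x ∉ closure B := fun h => by
      have h1 : w x = 1 := ext_of_mem h
      have hyB : y ∉ closure B := fun h' => hzB (H.convB.closure h h' ha.le hb.le hab)
      have h2 : w y = u y := ext_of_notMem hyB
      linarith [H.lt_one ⟨hyA, hyB⟩]
    have hyB : y ∉ closure B := fun h => by
      have h1 : w y = 1 := ext_of_mem h
      have h2 : w x = u x := ext_of_notMem hxB
      linarith [H.lt_one ⟨hxA, hxB⟩]
    have hwx : w x = u x := ext_of_notMem hxB
    have hwy : w y = u y := ext_of_notMem hyB
    refine two_point (fun i : Fin n => EuclideanSpace.single i (1 : ℝ)) ha hb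
      (H.contDiffAt_perturb ε hzD) (H.contDiffAt x ⟨hxA, hxB⟩) (H.contDiffAt y ⟨hyA, hyB⟩)
      (H.fderiv_ne_zero ⟨hxA, hxB⟩ (by linarith)) (H.fderiv_ne_zero ⟨hyA, hyB⟩ (by linarith))
      (H.laplace_perturb hε0 hzD) (H.laplace x ⟨hxA, hxB⟩) (H.laplace y ⟨hyA, hyB⟩) ?_
    filter_upwards [hloc, c1.eventually (ext_eventuallyEq (u := u) hxB),
      c2.eventually (ext_eventuallyEq (u := u) hyB)] with v h1 h2 h3
    rw [hw, h2, h3, ← hw, hxy, min_self] at h1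
    rw [← hwx, ← hwy, hxy, min_sub_sub_right]
    exact h1
  -- Moving `x` alone leaves `min (w x) (w y)` unchanged.
  · refine H.not_isLocalMin hε0 hzD ha ?_
    have ct : Tendsto (fun v : EuclideanSpace ℝ (Fin n) => (v, (0 : EuclideanSpace ℝ (Fin n))))
        (𝓝 0) (𝓝 (0, 0)) := (Continuous.prodMk_left _).tendsto 0
    filter_upwards [ct.eventually hloc, hcmp x hxA _ hxy] with v h1 h2
    simp only [add_zero, smul_zero, min_eq_right hxy.le, min_eq_right h2.le] at h1
    linarith

end RingPotential
end Ring

/-- Convexity of superlevel sets in a convex ring (Theorem `Long`). -/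
theorem stmt_0 (n : ℕ) (hn : 2 ≤ n) (A B : Set (EuclideanSpace ℝ (Fin n)))
    (hAo : IsOpen A) (hBo : IsOpen B)
    (hAb : Bornology.IsBounded A) (hBb : Bornology.IsBounded B)
    (hAconv : Convex ℝ A) (hBconv : Convex ℝ B)
    (hAne : A.Nonempty) (hBne : B.Nonempty)
    (hBA : closure B ⊆ A)
    (u : EuclideanSpace ℝ (Fin n) → ℝ)
    (hu2 : ContDiffOn ℝ 2 u (A \ closure B))
    (hharm : ∀ x ∈ A \ closure B,
      ∑ i : Fin n, iteratedFDerivWithin ℝ 2 u (A \ closure B) x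
        ![EuclideanSpace.single i 1, EuclideanSpace.single i 1] = 0)
    (hcont : ContinuousOn u (closure (A \ closure B)))
    (hB1 : ∀ x ∈ frontier B, u x = 1)
    (hA0 : ∀ x ∈ frontier A, u x = 0)
    (c : ℝ) (hc : c ∈ Set.Ioo (0 : ℝ) 1) :
    Convex ℝ ({x ∈ A \ closure B | c ≤ u x} ∪ closure B) := by
  have hDo : IsOpen (A \ closure B) := hAo.sdiff isClosed_closure
  have H : RingPotential A B u :=
    { dim_pos := by omega
      openA := hAo, openB := hBo, bddA := hAb, convA := hAconv, convB := hBconv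
      nonemptyB := hBne, sub := hBA
      contDiffAt := fun x hx => hu2.contDiffAt (hDo.mem_nhds hx)
      laplace := fun x hx => by
        have := hharm x hx
        simpa only [iteratedFDerivWithin_of_isOpen 2 hDo hx, iteratedFDeriv_two_apply,
          Matrix.cons_val_zero, Matrix.cons_val_one] using this
      cont := hcont, one_B := hB1, zero_A := hA0 }
  have hmem : ∀ x, x ∈ {x ∈ A \ closure B | c ≤ u x} ∪ closure B ↔
      x ∈ A ∧ c ≤ RingPotential.ext B u x := by
    intro x
    by_cases h : x ∈ closure B
    · simp [h, hBA h, RingPotential.ext_of_mem h, hc.2.le]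
    · simp [h, RingPotential.ext_of_notMem h]
  refine convex_iff_forall_pos.2 fun x hx y hy a b ha hb hab => ?_
  rw [hmem] at hx hy ⊢
  exact ⟨hAconv hx.1 hy.1 ha.le hb.le hab,
    (le_min hx.2 hy.2).trans (H.quasiconcave hx.1 hy.1 ha hb hab)⟩
end

section
/- Let Ω ⊂ {z ∈ ℂ : Re z > 0} be an open convex domain that contains the positive real axis {x + 0i : x > 0} and is symmetric with respect to it (z ∈ Ω iff conj(z) ∈ Ω). Let u be a Martin function on Ω. Then for every c > 0 the superlevel set Γ_c = {z ∈ Ω : u(z) > c} is convex. -/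
/-!
The idea is that, up to a constant factor, the Martin function `u` is the real part of the conformal
map `φ` of `Ω` onto the right half plane that fixes infinity, and that the preimages under `φ` of
the half planes `{Re w > t}` are convex by Study's theorem.

* Conformal map. The Riemann map is built by solving the usual extremal problem, with limits along
  an ultrafilter for compactness and Koebe's square root trick (`exists_extremal_diskEmbedding`,
  `image_eq_ball_of_extremal`). The symmetry of `Ω` and the uniqueness of the Riemann map make it
  real on the axis, whence a map `φ` to the half plane tending to `+∞` along the axis
  (`exists_symmetric_chart`).

* Study's theorem. Hyperbolic disks in a convex domain are convex, by the Schwarz lemma. The half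
  planes `{Re w > t}` are limits of hyperbolic disks with centres tending to infinity, so
  `Re φ (a z₁ + b z₂) ≥ min (Re φ z₁) (Re φ z₂)` (`HalfPlaneChart.study`).

* Boundary behaviour. Since `Ω` is invariant under translations to the right, Study's theorem makes
  `Re φ` increasing along horizontal rays, and hence also the real part of the inverse map
  `f`. Consequently `f` is bounded on bounded sets (`exists_chart_bounded`), unless `Ω` is the half
  plane itself, where the identity serves as `φ`. No Carathéodory theory is needed.

* Uniqueness. Transported to the disk, `u` is a positive harmonic function whose boundary values
  vanish except at `1`. The Poisson formula on circles of radius tending to `1` shows that it is a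
  multiple of the Poisson kernel at `1`, that is, of `Re φ` (`HalfPlaneChart.eq_mul_re`).
-/

section

open Complex Set Metric Filter Topology

/-! ### The pseudo-hyperbolic distance and square roots -/

/-- The disk automorphism `w ↦ (w - c) / (1 - conj c * w)` moving `c` to `0`. For `‖c‖, ‖w‖ < 1` its
modulus is the pseudo-hyperbolic distance between `c` and `w`. -/
noncomputable def diskMoeb (c w : ℂ) : ℂ := (w - c) / (1 - (starRingEnd ℂ) c * w)

theorem diskMoeb_normSq_lt {c w : ℂ} (hc : ‖c‖ < 1) (hw : ‖w‖ < 1) :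
    normSq (w - c) < normSq (1 - (starRingEnd ℂ) c * w) := by
  have h1 : c.re * c.re + c.im * c.im < 1 := by
    rw [← normSq_apply, normSq_eq_norm_sq]; nlinarith [norm_nonneg c]
  have h2 : w.re * w.re + w.im * w.im < 1 := by
    rw [← normSq_apply, normSq_eq_norm_sq]; nlinarith [norm_nonneg w]
  have := mul_pos (sub_pos.2 h1) (sub_pos.2 h2)
  simp [normSq_apply]
  nlinarith

theorem diskMoeb_den_ne {c w : ℂ} (hc : ‖c‖ < 1) (hw : ‖w‖ < 1) :
    1 - (starRingEnd ℂ) c * w ≠ 0 := by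
  intro h
  have := diskMoeb_normSq_lt hc hw
  rw [h, map_zero] at this
  exact absurd (normSq_nonneg (w - c)) (by linarith)

theorem norm_lt_of_normSq_lt {a b : ℂ} (h : normSq a < normSq b) : ‖a‖ < ‖b‖ := by
  rw [normSq_eq_norm_sq, normSq_eq_norm_sq] at h
  exact lt_of_pow_lt_pow_left₀ 2 (norm_nonneg _) h

theorem norm_diskMoeb_lt {c w : ℂ} (hc : ‖c‖ < 1) (hw : ‖w‖ < 1) : ‖diskMoeb c w‖ < 1 := by
  rw [diskMoeb, norm_div, div_lt_one (norm_pos_iff.2 (diskMoeb_den_ne hc hw))]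
  exact norm_lt_of_normSq_lt (diskMoeb_normSq_lt hc hw)

theorem diskMoeb_inj {c w v : ℂ} (hc : ‖c‖ < 1) (hw : ‖w‖ < 1) (hv : ‖v‖ < 1)
    (h : diskMoeb c w = diskMoeb c v) : w = v := by
  have h1 := diskMoeb_den_ne hc hw
  have h2 := diskMoeb_den_ne hc hv
  rw [diskMoeb, diskMoeb, div_eq_div_iff h1 h2] at h
  have h3 : (w - v) * (1 - (starRingEnd ℂ) c * c) = 0 := by linear_combination h
  have h4 := diskMoeb_den_ne hc hc
  rcases mul_eq_zero.1 h3 with h | h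
  · exact sub_eq_zero.1 h
  · exact absurd h h4

theorem diskMoeb_self (c : ℂ) : diskMoeb c c = 0 := by simp [diskMoeb]

theorem diskMoeb_eq_zero {c w : ℂ} (hc : ‖c‖ < 1) (hw : ‖w‖ < 1) (h : diskMoeb c w = 0) :
    w = c := diskMoeb_inj hc hw hc (by rw [h, diskMoeb_self])

theorem DifferentiableOn.diskMoeb {U : Set ℂ} {f : ℂ → ℂ} {c : ℂ} (hf : DifferentiableOn ℂ f U)
    (hc : ‖c‖ < 1) (hm : MapsTo f U (ball 0 1)) :
    DifferentiableOn ℂ (fun z => diskMoeb c (f z)) U := by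
  unfold _root_.diskMoeb
  refine (hf.sub_const c).div ((differentiableOn_const _).sub (hf.const_mul _)) ?_
  intro z hz
  exact diskMoeb_den_ne hc (by simpa using hm hz)

/-- Squaring strictly contracts the pseudo-hyperbolic distance: `w ↦ w²` is a self-map of the disk
that is not an automorphism. This is the source of the gain in the square root trick. -/
theorem norm_diskMoeb_sq_lt {x y : ℂ} (hx : ‖x‖ < 1) (hy : ‖y‖ < 1) (hxy : x ≠ y) :
    ‖diskMoeb (x ^ 2) (y ^ 2)‖ < ‖diskMoeb x y‖ := by
  have hd := diskMoeb_den_ne hx hy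
  have hd' := diskMoeb_den_ne (c := -x) (w := y) (by simpa using hx) hy
  have hn : ‖diskMoeb (-x) y‖ < 1 := norm_diskMoeb_lt (by simpa using hx) hy
  have h1 : diskMoeb (x ^ 2) (y ^ 2) = diskMoeb x y * diskMoeb (-x) y := by
    have : (1 : ℂ) - (starRingEnd ℂ) (x ^ 2) * y ^ 2
      = (1 - (starRingEnd ℂ) x * y) * (1 - (starRingEnd ℂ) (-x) * y) := by
      simp; ring
    rw [diskMoeb, diskMoeb, diskMoeb, div_mul_div_comm, this]
    congr 1; ring
  have h0 : 0 < ‖diskMoeb x y‖ :=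
    norm_pos_iff.2 fun h => hxy (diskMoeb_eq_zero hx hy h).symm
  rw [h1, norm_mul]
  nlinarith

theorem isSimplyConnected_of_convex {U : Set ℂ} (hU : Convex ℝ U) (hne : U.Nonempty) :
    IsSimplyConnected U := by
  have := hU.contractibleSpace hne
  exact SimplyConnectedSpace.ofContractible U

/-- Nonvanishing holomorphic functions on convex open sets have holomorphic square roots. The
continuous root comes from covering theory and is holomorphic because `w ↦ w²` has a nonzero
derivative away from `0`. -/
theorem exists_holo_sqrt {U : Set ℂ} (hUo : IsOpen U) (hUc : Convex ℝ U) {g : ℂ → ℂ}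
    (hg : DifferentiableOn ℂ g U) (h0 : ∀ z ∈ U, g z ≠ 0) :
    ∃ h : ℂ → ℂ, DifferentiableOn ℂ h U ∧ ∀ z, h z ^ 2 = g z := by
  rcases U.eq_empty_or_nonempty with rfl | hne
  · exact ⟨fun z => (g z) ^ (1 / 2 : ℂ), differentiableOn_empty, fun z => by
      simp [← cpow_mul_nat]⟩
  obtain ⟨h, hc, hh⟩ := exists_continuousOn_pow_eq (isSimplyConnected_of_convex hUc hne) hUo
    hg.continuousOn (by rintro ⟨z, hz, h⟩; exact h0 z hz h) (n := 2) two_ne_zero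
  refine ⟨h, fun z hz => DifferentiableAt.differentiableWithinAt ?_, hh⟩
  have hne : h z ≠ 0 := fun h' => h0 z hz (by rw [← hh, h']; simp)
  -- difference quotients: `h w - h z = (g w - g z) / (h w + h z)`
  have hca : ContinuousAt h z := hc.continuousAt (hUo.mem_nhds hz)
  have hga := (hg.differentiableAt (hUo.mem_nhds hz)).hasDerivAt
  have : HasDerivAt h (deriv g z / (h z + h z)) z := by
    rw [hasDerivAt_iff_tendsto_slope] at hga ⊢
    have hs : Tendsto (fun w => h w + h z) (𝓝[≠] z) (𝓝 (h z + h z)) :=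
      (hca.tendsto.add_const _).mono_left nhdsWithin_le_nhds
    have hne2 : h z + h z ≠ 0 := by rw [← two_mul]; exact mul_ne_zero two_ne_zero hne
    refine (hga.div hs hne2).congr' ?_
    filter_upwards [hs.eventually_ne hne2, self_mem_nhdsWithin] with w hw hwz
    simp only [Pi.div_apply, slope_def_field]
    have : w - z ≠ 0 := sub_ne_zero.2 hwz
    rw [← hh w, ← hh z]
    field_simp
    ring
  exact this.differentiableAt

/-! ### The Riemann mapping theorem for convex domains -/

/-- Injective holomorphic maps of `U` into the unit disk that send `p` to `0`. -/
structure DiskEmbedding (U : Set ℂ) (p : ℂ) (ψ : ℂ → ℂ) : Prop where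
  diff : DifferentiableOn ℂ ψ U
  maps : MapsTo ψ U (ball 0 1)
  inj : InjOn ψ U
  base : ψ p = 0

theorem DiskEmbedding.norm_lt {U : Set ℂ} {p : ℂ} {ψ : ℂ → ℂ} (h : DiskEmbedding U p ψ) {z : ℂ}
    (hz : z ∈ U) : ‖ψ z‖ < 1 := by simpa using h.maps hz

theorem dist_le_of_mapsTo_unitBall {f : ℂ → ℂ} {U : Set ℂ} {c z : ℂ} {R : ℝ} (hR : 0 < R)
    (hd : DifferentiableOn ℂ f U) (hm : MapsTo f U (ball 0 1)) (hb : ball c R ⊆ U)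
    (hz : z ∈ ball c R) : dist (f z) (f c) ≤ 2 / R * dist z c := by
  refine Complex.dist_le_div_mul_dist_of_mapsTo_ball (hd.mono hb) ?_ hz
  intro w hw
  have h1 : ‖f w‖ < 1 := by simpa using hm (hb hw)
  have h2 : ‖f c‖ < 1 := by simpa using hm (hb (mem_ball_self hR))
  rw [mem_closedBall, dist_eq_norm]
  linarith [norm_sub_le (f w) (f c)]

/-- Maps into the unit disk are locally equi-Lipschitz by the Schwarz lemma, so pointwise limits
are locally uniform. With an ultrafilter in place of a subsequence this replaces Montel's
theorem. -/
theorem tendstoLocallyUniformlyOn_of_pointwise {U : Set ℂ} (hUo : IsOpen U) {F : ℕ → ℂ → ℂ}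
    {f : ℂ → ℂ} {l : Filter ℕ} [l.NeBot] (hd : ∀ n, DifferentiableOn ℂ (F n) U)
    (hm : ∀ n, MapsTo (F n) U (ball 0 1)) (hl : ∀ z ∈ U, Tendsto (fun n => F n z) l (𝓝 (f z))) :
    TendstoLocallyUniformlyOn F f l U := by
  rw [Metric.tendstoLocallyUniformlyOn_iff]
  intro ε hε c hc
  obtain ⟨R, hR, hb⟩ := Metric.isOpen_iff.1 hUo c hc
  have hlim : ∀ z ∈ ball c R, dist (f z) (f c) ≤ 2 / R * dist z c := fun z hz =>
    le_of_tendsto ((hl z (hb hz)).dist (hl c hc))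
      (Eventually.of_forall fun n => dist_le_of_mapsTo_unitBall hR (hd n) (hm n) hb hz)
  set δ := min R (R / 2 * (ε / 3)) with hδ
  have hδ0 : 0 < δ := lt_min hR (by positivity)
  refine ⟨ball c δ, mem_nhdsWithin_of_mem_nhds (ball_mem_nhds c hδ0), ?_⟩
  filter_upwards [Metric.tendsto_nhds.1 (hl c hc) (ε / 3) (by positivity)] with n hn z hz
  have hzR : z ∈ ball c R := ball_subset_ball (min_le_left _ _) hz
  have hs : 2 / R * dist z c < ε / 3 := by
    have : dist z c < R / 2 * (ε / 3) := lt_of_lt_of_le hz (min_le_right _ _)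
    calc 2 / R * dist z c < 2 / R * (R / 2 * (ε / 3)) := by gcongr
      _ = ε / 3 := by field_simp
  have h1 := hlim z hzR
  have h2 := dist_le_of_mapsTo_unitBall hR (hd n) (hm n) hb hzR
  have h3 := dist_triangle4 (f z) (f c) (F n c) (F n z)
  rw [dist_comm (f c), dist_comm (F n c) (F n z)] at h3
  linarith

/-- Hurwitz's theorem: a nonconstant locally uniform limit of injective holomorphic maps is
injective. If `f a = f b`, the quantitative open mapping theorem on a small disk around `b` gives
a second solution of `F n z = F n a` near `b`. -/
theorem injOn_of_tendstoLocallyUniformlyOn {U : Set ℂ} (hUo : IsOpen U) (hUc : IsPreconnected U)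
    {F : ℕ → ℂ → ℂ} {f : ℂ → ℂ} {l : Filter ℕ} [l.NeBot] (hd : ∀ n, DifferentiableOn ℂ (F n) U)
    (hi : ∀ n, InjOn (F n) U) (hl : TendstoLocallyUniformlyOn F f l U)
    {p q : ℂ} (hp : p ∈ U) (hq : q ∈ U) (hpq : f p ≠ f q) : InjOn f U := by
  have hf : DifferentiableOn ℂ f U := hl.differentiableOn (Eventually.of_forall hd) hUo
  have hfa : AnalyticOnNhd ℂ f U := hf.analyticOnNhd hUo
  intro a ha b hb hab
  by_contra hne
  have hev : ∀ᶠ z in 𝓝[≠] b, f z ≠ f b := by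
    by_contra hcon
    have hcon' : ∃ᶠ z in 𝓝[≠] b, f z = f b :=
      (Filter.not_eventually.1 hcon).mono fun z hz => not_not.1 hz
    have := hfa.eqOn_of_preconnected_of_frequently_eq analyticOnNhd_const hUc hb hcon'
    exact hpq ((this hp).trans (this hq).symm)
  have hev2 : ∀ᶠ z in 𝓝 b, z ∈ U ∧ z ≠ a ∧ (z ≠ b → f z ≠ f b) := by
    filter_upwards [hUo.mem_nhds hb, isOpen_ne.mem_nhds (Ne.symm hne),
      eventually_nhdsWithin_iff.1 hev] with z h1 h2 h3
    exact ⟨h1, h2, h3⟩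
  obtain ⟨r, hr, hball⟩ := (nhds_basis_closedBall.eventually_iff).1 hev2
  have hsub : closedBall b r ⊆ U := fun z hz => (hball hz).1
  have hsph : (sphere b r).Nonempty := by simpa using hr.le
  obtain ⟨w, hw, hwmin⟩ := (isCompact_sphere b r).exists_isMinOn hsph
    (f := fun z => ‖f z - f b‖)
    ((hf.continuousOn.mono (sphere_subset_closedBall.trans hsub)).sub continuousOn_const).norm
  set m := ‖f w - f b‖ with hm
  have hwb : w ≠ b := ne_of_mem_sphere hw hr.ne'
  have hm0 : 0 < m :=
    norm_pos_iff.2 (sub_ne_zero.2 ((hball (sphere_subset_closedBall hw)).2.2 hwb))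
  have hunif : ∀ᶠ n in l, ∀ z ∈ closedBall b r, dist (f z) (F n z) < m / 8 :=
    Metric.tendstoUniformlyOn_iff.1
      ((tendstoLocallyUniformlyOn_iff_forall_isCompact hUo).1 hl _ hsub (isCompact_closedBall b r))
      _ (by positivity)
  have hpt : ∀ᶠ n in l, ∀ z ∈ ({a} : Set ℂ), dist (f z) (F n z) < m / 8 :=
    Metric.tendstoUniformlyOn_iff.1
      ((tendstoLocallyUniformlyOn_iff_forall_isCompact hUo).1 hl _ (by simpa using ha)
        isCompact_singleton) _ (by positivity)
  obtain ⟨n, hn1, hn2⟩ := (hunif.and hpt).exists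
  have hn2 := hn2 a rfl
  have hnb := hn1 b (mem_closedBall_self hr.le)
  have hsph' : ∀ z ∈ sphere b r, 3 * m / 4 ≤ ‖F n z - F n b‖ := by
    intro z hz
    have h1 : m ≤ ‖f z - f b‖ := hwmin hz
    have h2 := hn1 z (sphere_subset_closedBall hz)
    rw [← dist_eq_norm] at h1 ⊢
    have h3 := dist_triangle4 (f z) (F n z) (F n b) (f b)
    rw [dist_comm (F n b) (f b)] at h3
    linarith
  have himg := DiffContOnCl.ball_subset_image_closedBall
    (f := F n) (z₀ := b) (r := r) (ε := 3 * m / 4)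
    (((hd n).mono (closure_ball_subset_closedBall.trans hsub)).diffContOnCl) hr hsph' (by
      have : ∀ᶠ z in 𝓝[≠] b, F n z ≠ F n b := by
        filter_upwards [mem_nhdsWithin_of_mem_nhds (hUo.mem_nhds hb), self_mem_nhdsWithin]
          with z hz hzb h
        exact hzb (hi n hz hb h)
      exact this.frequently.filter_mono nhdsWithin_le_nhds)
  have hmem : F n a ∈ ball (F n b) (3 * m / 4 / 2) := by
    rw [mem_ball]
    have h3 := dist_triangle4 (F n a) (f a) (f b) (F n b)
    rw [dist_comm (F n a) (f a), hab, dist_self] at h3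
    rw [hab] at hn2
    linarith
  obtain ⟨c, hc, hca⟩ := himg hmem
  exact (hball hc).2.1 (hi n (hsub hc) ha hca)

/-- The extremal problem of the Riemann mapping theorem has a solution: some embedding maximizes
`‖χ q‖`. -/
theorem exists_extremal_diskEmbedding {U : Set ℂ} (hUo : IsOpen U) (hUc : IsPreconnected U)
    {p q : ℂ} (hp : p ∈ U) (hq : q ∈ U) (hpq : p ≠ q) {ψ₀ : ℂ → ℂ} (h₀ : DiskEmbedding U p ψ₀) :
    ∃ ψ, DiskEmbedding U p ψ ∧ ∀ χ, DiskEmbedding U p χ → ‖χ q‖ ≤ ‖ψ q‖ := by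
  set S : Set ℝ := {t | ∃ χ, DiskEmbedding U p χ ∧ ‖χ q‖ = t}
  have hSne : S.Nonempty := ⟨_, ψ₀, h₀, rfl⟩
  have hSb : BddAbove S := ⟨1, by rintro _ ⟨χ, hχ, rfl⟩; exact (hχ.norm_lt hq).le⟩
  obtain ⟨t, -, ht, htS⟩ := exists_seq_tendsto_sSup hSne hSb
  choose F hF hFt using htS
  -- limits along an ultrafilter exist pointwise, by compactness of the closed disk
  set l : Ultrafilter ℕ := Filter.hyperfilter ℕ
  have hll : (l : Filter ℕ) ≤ atTop := by
    rw [← Nat.cofinite_eq_atTop]; exact Filter.hyperfilter_le_cofinite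
  have hlim : ∀ z, ∃ a : ℂ, z ∈ U → Tendsto (fun n => F n z) l (𝓝 a) := by
    intro z
    by_cases hz : z ∈ U
    · obtain ⟨a, -, ha⟩ := (isCompact_closedBall (0 : ℂ) 1).ultrafilter_le_nhds
        (l.map (fun n => F n z)) (by
          rw [le_principal_iff]
          exact Eventually.of_forall (f := (l : Filter ℕ))
            fun n => ball_subset_closedBall ((hF n).maps hz))
      exact ⟨a, fun _ => ha⟩
    · exact ⟨0, fun h => absurd h hz⟩
  choose f hf using hlim
  have hlu : TendstoLocallyUniformlyOn F f l U :=
    tendstoLocallyUniformlyOn_of_pointwise hUo (fun n => (hF n).diff) (fun n => (hF n).maps) hf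
  have hfp : f p = 0 := tendsto_nhds_unique (hf p hp)
    (by simp only [(hF _).base]; exact tendsto_const_nhds)
  have hfq : ‖f q‖ = sSup S := tendsto_nhds_unique (hf q hq).norm
    (by simp only [hFt]; exact ht.mono_left hll)
  have hmax : ∀ χ, DiskEmbedding U p χ → ‖χ q‖ ≤ ‖f q‖ := fun χ hχ => by
    rw [hfq]; exact le_csSup hSb ⟨χ, hχ, rfl⟩
  have hpos : 0 < ‖f q‖ := by
    refine lt_of_lt_of_le (norm_pos_iff.2 fun h => hpq ?_) (hmax ψ₀ h₀)
    exact h₀.inj hp hq (by rw [h, h₀.base])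
  have hinj : InjOn f U := injOn_of_tendstoLocallyUniformlyOn hUo hUc (fun n => (hF n).diff)
    (fun n => (hF n).inj) hlu hp hq (by rw [hfp]; exact (norm_pos_iff.1 hpos).symm)
  have hdf : DifferentiableOn ℂ f U :=
    hlu.differentiableOn (Eventually.of_forall fun n => (hF n).diff) hUo
  have hle : ∀ z ∈ U, ‖f z‖ ≤ 1 := fun z hz => le_of_tendsto (hf z hz).norm
    (Eventually.of_forall fun n => ((hF n).norm_lt hz).le)
  have hopen : IsOpen (f '' U) := by
    rcases (hdf.analyticOnNhd hUo).is_constant_or_isOpen hUc with ⟨w, hw⟩ | h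
    · exact absurd (hinj hp hq ((hw p hp).trans (hw q hq).symm)) hpq
    · exact h U subset_rfl hUo
  have hsub : f '' U ⊆ ball 0 1 := by
    have : f '' U ⊆ interior (closedBall 0 1) :=
      interior_maximal (by rintro _ ⟨z, hz, rfl⟩; simpa using hle z hz) hopen
    rwa [interior_closedBall _ one_ne_zero] at this
  exact ⟨f, ⟨hdf, fun z hz => hsub ⟨z, hz, rfl⟩, hinj, hfp⟩, hmax⟩

/-- Koebe's square root trick: if an embedding omits a point `a` of the disk, taking a square root
of `diskMoeb a ∘ ψ` and moving the image of `p` back to `0` produces an embedding with a larger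
value at `q`. -/
theorem image_eq_ball_of_extremal {U : Set ℂ} (hUo : IsOpen U) (hUc : Convex ℝ U)
    {p q : ℂ} (hp : p ∈ U) (hq : q ∈ U) (hpq : p ≠ q) {ψ : ℂ → ℂ} (h : DiskEmbedding U p ψ)
    (hmax : ∀ χ, DiskEmbedding U p χ → ‖χ q‖ ≤ ‖ψ q‖) : ψ '' U = ball 0 1 := by
  refine Subset.antisymm (by rintro _ ⟨z, hz, rfl⟩; exact h.maps hz) fun a ha => ?_
  by_contra hna
  have ha1 : ‖a‖ < 1 := by simpa using ha
  obtain ⟨g, hgd, hg⟩ := exists_holo_sqrt hUo hUc (h.diff.diskMoeb ha1 h.maps) (by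
    intro z hz h0
    exact hna ⟨z, hz, diskMoeb_eq_zero ha1 (h.norm_lt hz) h0⟩)
  have hg1 : ∀ z ∈ U, ‖g z‖ < 1 := by
    intro z hz
    have := norm_diskMoeb_lt ha1 (h.norm_lt hz)
    rw [← hg, norm_pow] at this
    exact (pow_lt_one_iff_of_nonneg (norm_nonneg _) two_ne_zero).1 this
  have hginj : InjOn g U := by
    intro x hx y hy hxy
    have : g x ^ 2 = g y ^ 2 := by rw [hxy]
    rw [hg, hg] at this
    exact h.inj hx hy (diskMoeb_inj ha1 (h.norm_lt hx) (h.norm_lt hy) this)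
  have hgm : MapsTo g U (ball 0 1) := fun z hz => by simpa using hg1 z hz
  have hχ : DiskEmbedding U p (fun z => diskMoeb (g p) (g z)) :=
    ⟨hgd.diskMoeb (hg1 p hp) hgm,
     fun z hz => by simpa using norm_diskMoeb_lt (hg1 p hp) (hg1 z hz),
     fun x hx y hy hxy => hginj hx hy (diskMoeb_inj (hg1 p hp) (hg1 x hx) (hg1 y hy) hxy),
     diskMoeb_self _⟩
  have h1 := hmax _ hχ
  have h2 := norm_diskMoeb_sq_lt (hg1 p hp) (hg1 q hq) fun h' => hpq (hginj hp hq h')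
  rw [hg, hg] at h2
  -- Moebius maps preserve the pseudo-hyperbolic distance
  have h3 : ‖diskMoeb (diskMoeb a (ψ p)) (diskMoeb a (ψ q))‖ = ‖ψ q‖ := by
    rw [h.base]
    set w := ψ q
    have hw : ‖w‖ < 1 := h.norm_lt hq
    have hd := diskMoeb_den_ne ha1 hw
    have hd2 := diskMoeb_den_ne ha1 ha1
    have e1 : diskMoeb a 0 = -a := by simp [diskMoeb]
    have e2 : diskMoeb (-a) (diskMoeb a w) = w := by
      have hn : 1 - (starRingEnd ℂ) (-a) * diskMoeb a w
          = (1 - (starRingEnd ℂ) a * a) / (1 - (starRingEnd ℂ) a * w) := by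
        simp only [diskMoeb, map_neg]; field_simp; ring
      have hn' : diskMoeb a w - -a
          = w * (1 - (starRingEnd ℂ) a * a) / (1 - (starRingEnd ℂ) a * w) := by
        rw [diskMoeb, eq_div_iff hd, sub_mul, div_mul_cancel₀ _ hd]
        ring
      rw [diskMoeb, hn, hn', div_div_div_cancel_right₀ hd, mul_div_cancel_right₀ _ hd2]
    rw [e1, e2]
  rw [h3] at h2
  exact absurd h1 (not_le.2 h2)

/-- The inverse of an injective holomorphic map is holomorphic. -/
theorem differentiableOn_of_rightInverse {U V : Set ℂ} (hUo : IsOpen U) {ψ f : ℂ → ℂ}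
    (hψ : DifferentiableOn ℂ ψ U) (hV : IsOpen V) (hfm : MapsTo f V U)
    (hinj : InjOn ψ U) (hf : ∀ w ∈ V, ψ (f w) = w) (hψV : MapsTo ψ U V) :
    DifferentiableOn ℂ f V := by
  have han := hψ.analyticOnNhd hUo
  have hleft : ∀ z ∈ U, f (ψ z) = z := fun z hz => hinj (hfm (hψV hz)) hz (hf _ (hψV hz))
  have hcont : ∀ w ∈ V, ContinuousAt f w := by
    intro w hw
    have hnb : 𝓝 w ≤ map ψ (𝓝 (f w)) := by
      rcases (han (f w) (hfm hw)).eventually_constant_or_nhds_le_map_nhds with h | h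
      · exfalso
        have h2 : ∀ᶠ z in 𝓝[≠] (f w), z = f w := by
          filter_upwards [mem_nhdsWithin_of_mem_nhds h,
            mem_nhdsWithin_of_mem_nhds (hUo.mem_nhds (hfm hw))] with z hz hzU
          exact hinj hzU (hfm hw) hz
        obtain ⟨z, hz1, hz2⟩ := (h2.and self_mem_nhdsWithin).exists
        exact hz2 hz1
      · rwa [hf w hw] at h
    intro s hs
    have : ψ '' (s ∩ U) ∈ 𝓝 w :=
      hnb (image_mem_map (inter_mem hs (hUo.mem_nhds (hfm hw))))
    refine mem_map.2 (mem_of_superset this ?_)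
    rintro _ ⟨z, ⟨hzs, hzU⟩, rfl⟩
    simpa [hleft z hzU] using hzs
  have hdiff : ∀ w ∈ V, deriv ψ (f w) ≠ 0 → DifferentiableAt ℂ f w := fun w hw h0 =>
    (HasDerivAt.of_local_left_inverse (hcont w hw)
      ((hψ.differentiableAt (hUo.mem_nhds (hfm hw))).hasDerivAt) h0
      (by filter_upwards [hV.mem_nhds hw] with y hy using hf y hy)).differentiableAt
  intro w hw
  refine (analyticAt_of_differentiable_on_punctured_nhds_of_continuousAt ?_
    (hcont w hw)).differentiableAt.differentiableWithinAt
  have hd : AnalyticAt ℂ (deriv ψ) (f w) := (han (f w) (hfm hw)).deriv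
  rcases hd.eventually_eq_zero_or_eventually_ne_zero with h | h
    -- a vanishing derivative would make `ψ` locally constant
  · exfalso
    obtain ⟨R, hR, hb⟩ := Metric.eventually_nhds_iff_ball.1
      (h.and (hUo.mem_nhds (hfm hw)))
    have hconst : ∀ z ∈ ball (f w) R, ψ z = ψ (f w) := fun z hz =>
      (isOpen_ball.is_const_of_deriv_eq_zero (convex_ball _ _).isPreconnected
        (hψ.mono fun y hy => (hb y hy).2) (fun y hy => (hb y hy).1) hz (mem_ball_self hR))
    have h2 : ∀ᶠ z in 𝓝[≠] (f w), z = f w := by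
      filter_upwards [mem_nhdsWithin_of_mem_nhds (ball_mem_nhds (f w) hR)] with z hz
      exact hinj (hb z hz).2 (hfm hw) (hconst z hz)
    obtain ⟨z, hz1, hz2⟩ := (h2.and self_mem_nhdsWithin).exists
    exact hz2 hz1
  · have ht : Tendsto f (𝓝[≠] w) (𝓝[≠] (f w)) := by
      refine tendsto_nhdsWithin_iff.2 ⟨(hcont w hw).tendsto.mono_left nhdsWithin_le_nhds, ?_⟩
      filter_upwards [mem_nhdsWithin_of_mem_nhds (hV.mem_nhds hw), self_mem_nhdsWithin]
        with y hy hyw h'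
      exact hyw (by rw [mem_singleton_iff, ← hf y hy, ← hf w hw, h'])
    filter_upwards [ht.eventually h, mem_nhdsWithin_of_mem_nhds (hV.mem_nhds hw)] with y h1 h2
    exact hdiff y h2 h1

/-! ### Study's theorem -/

/-- The right half plane. -/
def rightHalf : Set ℂ := {z : ℂ | 0 < z.re}

/-- The Cayley transform `w ↦ (w - X) / (w + X)`, mapping the right half plane to the unit disk and
`X` to `0`. -/
noncomputable def cay (X : ℝ) (w : ℂ) : ℂ := (w - X) / (w + X)

/-- The inverse Cayley transform `ζ ↦ X (1 + ζ) / (1 - ζ)`. -/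
noncomputable def cayInv (X : ℝ) (ζ : ℂ) : ℂ := X * (1 + ζ) / (1 - ζ)

theorem isOpen_rightHalf : IsOpen rightHalf := isOpen_lt continuous_const continuous_re

theorem convex_rightHalf : Convex ℝ rightHalf := convex_halfSpace_re_gt 0

theorem cay_den_ne {X : ℝ} (hX : 0 < X) {w : ℂ} (hw : w ∈ rightHalf) : w + X ≠ 0 := by
  intro h
  have := congrArg re h
  have hw' : 0 < w.re := hw
  simp at this
  linarith

theorem one_sub_ne {ζ : ℂ} (h : ‖ζ‖ < 1) : 1 - ζ ≠ 0 := by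
  intro h'
  rw [← sub_eq_zero.1 h'] at h
  simp at h

theorem one_sub_sq_cay {X : ℝ} (hX : 0 < X) {w : ℂ} (hw : w ∈ rightHalf) :
    (1 - ‖cay X w‖ ^ 2) * ‖w + X‖ ^ 2 = 4 * X * w.re := by
  have h := norm_ne_zero_iff.2 (cay_den_ne hX hw)
  rw [cay, norm_div, div_pow, sub_mul, div_mul_cancel₀ _ (pow_ne_zero 2 h),
    ← normSq_eq_norm_sq, ← normSq_eq_norm_sq, normSq_apply, normSq_apply]
  simp
  ring

theorem norm_cay_lt {X : ℝ} (hX : 0 < X) {w : ℂ} (hw : w ∈ rightHalf) : ‖cay X w‖ < 1 := by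
  have h := norm_pos_iff.2 (cay_den_ne hX hw)
  have h1 := one_sub_sq_cay hX hw
  have hw' : 0 < w.re := hw
  have h2 : 0 < (1 - ‖cay X w‖ ^ 2) * ‖w + X‖ ^ 2 := by rw [h1]; positivity
  have h3 := pos_of_mul_pos_left h2 (by positivity)
  nlinarith [norm_nonneg (cay X w)]

/-- Under the Cayley transform the real part becomes the Poisson kernel of the disk at `1`. -/
theorem re_cayInv {X : ℝ} {ζ : ℂ} (h : ‖ζ‖ < 1) :
    (cayInv X ζ).re = X * ((1 - ‖ζ‖ ^ 2) / ‖1 - ζ‖ ^ 2) := by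
  have h0 := norm_ne_zero_iff.2 (one_sub_ne h)
  rw [cayInv, mul_div_assoc, re_ofReal_mul, div_re, ← normSq_eq_norm_sq, ← normSq_eq_norm_sq,
    ← add_div]
  congr 2
  simp [normSq_apply]
  ring

theorem cayInv_mem {X : ℝ} (hX : 0 < X) {ζ : ℂ} (h : ‖ζ‖ < 1) : cayInv X ζ ∈ rightHalf := by
  change 0 < (cayInv X ζ).re
  have h0 := norm_pos_iff.2 (one_sub_ne h)
  rw [re_cayInv h]
  have : 0 < 1 - ‖ζ‖ ^ 2 := by nlinarith [norm_nonneg ζ]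
  positivity

theorem cay_cayInv {X : ℝ} (hX : 0 < X) {ζ : ℂ} (h : ‖ζ‖ < 1) : cay X (cayInv X ζ) = ζ := by
  have h0 := one_sub_ne h
  have hX' : (X : ℂ) ≠ 0 := by exact_mod_cast hX.ne'
  have h1 : cayInv X ζ + X = 2 * X / (1 - ζ) := by rw [cayInv]; field_simp; ring
  have h2 : cayInv X ζ - X = 2 * X * ζ / (1 - ζ) := by rw [cayInv]; field_simp; ring
  rw [cay, h1, h2, div_div_div_cancel_right₀ h0, mul_div_cancel_left₀ _ (by simpa using hX')]

theorem cayInv_cay {X : ℝ} (hX : 0 < X) {w : ℂ} (hw : w ∈ rightHalf) : cayInv X (cay X w) = w := by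
  have h0 := cay_den_ne hX hw
  have hX' : (X : ℂ) ≠ 0 := by exact_mod_cast hX.ne'
  have h1 : 1 - cay X w = 2 * X / (w + X) := by rw [cay]; field_simp; ring
  have h2 : X * (1 + cay X w) = 2 * X * w / (w + X) := by rw [cay]; field_simp; ring
  rw [cayInv, h1, h2, div_div_div_cancel_right₀ h0, mul_div_cancel_left₀ _ (by simpa using hX')]

theorem DifferentiableOn.cay {U : Set ℂ} {g : ℂ → ℂ} {X : ℝ} (hX : 0 < X)
    (hg : DifferentiableOn ℂ g U) (hm : MapsTo g U rightHalf) :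
    DifferentiableOn ℂ (fun z => cay X (g z)) U := by
  unfold _root_.cay
  exact (hg.sub_const _).div (hg.add_const _) fun z hz => cay_den_ne hX (hm hz)

theorem DifferentiableOn.cayInv {U : Set ℂ} {g : ℂ → ℂ} {X : ℝ}
    (hg : DifferentiableOn ℂ g U) (hm : MapsTo g U (ball 0 1)) :
    DifferentiableOn ℂ (fun z => cayInv X (g z)) U := by
  unfold _root_.cayInv
  refine ((hg.const_add _).const_mul _).div (hg.const_sub _) fun z hz => one_sub_ne ?_
  simpa using hm hz

/-- A biholomorphic map `φ` of `Ω` onto the right half plane, together with its inverse `f`. -/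
structure HalfPlaneChart (Ω : Set ℂ) (φ f : ℂ → ℂ) : Prop where
  diff : DifferentiableOn ℂ φ Ω
  diff_inv : DifferentiableOn ℂ f rightHalf
  maps : MapsTo φ Ω rightHalf
  maps_inv : MapsTo f rightHalf Ω
  left_inv : ∀ z ∈ Ω, f (φ z) = z
  right_inv : ∀ w ∈ rightHalf, φ (f w) = w

/-- Study's argument: hyperbolic disks of a convex domain are convex. If `ζ₁, ζ₂` are the disk
coordinates of the two points and `‖ζ₁‖ ≤ ‖ζ₂‖`, the Schwarz lemma is applied to the self-map of
the disk induced by the convex combination of `f (ζ ζ₁ / ζ₂)` and `f ζ`, at `ζ = ζ₂`. -/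
theorem HalfPlaneChart.study_disk {Ω : Set ℂ} {φ f : ℂ → ℂ} (h : HalfPlaneChart Ω φ f)
    (hc : Convex ℝ Ω) {X : ℝ} (hX : 0 < X) {z₁ z₂ : ℂ} (h₁ : z₁ ∈ Ω) (h₂ : z₂ ∈ Ω)
    {a b : ℝ} (ha : 0 ≤ a) (hb : 0 ≤ b) (hab : a + b = 1) :
    ‖cay X (φ (a * z₁ + b * z₂))‖ ≤ max ‖cay X (φ z₁)‖ ‖cay X (φ z₂)‖ := by
  wlog hle : ‖cay X (φ z₁)‖ ≤ ‖cay X (φ z₂)‖ generalizing z₁ z₂ a b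
  · rw [add_comm, max_comm]
    exact this h₂ h₁ hb ha (by rw [add_comm, hab]) (le_of_not_ge hle)
  rw [max_eq_right hle]
  set ζ₁ := cay X (φ z₁) with hζ₁
  set ζ₂ := cay X (φ z₂) with hζ₂
  have hn₂ : ‖ζ₂‖ < 1 := norm_cay_lt hX (h.maps h₂)
  have hfz₁ : f (cayInv X ζ₁) = z₁ := by rw [hζ₁, cayInv_cay hX (h.maps h₁), h.left_inv _ h₁]
  have hfz₂ : f (cayInv X ζ₂) = z₂ := by rw [hζ₂, cayInv_cay hX (h.maps h₂), h.left_inv _ h₂]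
  have hconv : ∀ x ∈ Ω, ∀ y ∈ Ω, (a * x + b * y : ℂ) ∈ Ω := fun x hx y hy => by
    simpa [real_smul] using hc hx hy ha hb hab
  by_cases h0 : ζ₂ = 0
  · have h1 : ζ₁ = 0 := by rw [h0, norm_zero] at hle; exact norm_le_zero_iff.1 hle
    have h12 : z₁ = z₂ := by rw [← hfz₁, ← hfz₂, h1, h0]
    have : (a * z₁ + b * z₂ : ℂ) = z₂ := by
      rw [h12, ← add_mul]; norm_cast; rw [hab]; simp
    rw [this]
  have hpos : 0 < ‖ζ₂‖ := norm_pos_iff.2 h0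
  set q := ζ₁ / ζ₂ with hq
  have hqle : ‖q‖ ≤ 1 := by rw [hq, norm_div]; exact (div_le_one hpos).2 hle
  have hmul : MapsTo (fun ζ : ℂ => q * ζ) (ball 0 1) (ball 0 1) := fun ζ hζ => by
    have : ‖ζ‖ < 1 := by simpa using hζ
    simp only [mem_ball_zero_iff, norm_mul]
    nlinarith [norm_nonneg ζ, norm_nonneg q]
  have hin : ∀ ζ ∈ ball (0 : ℂ) 1, cayInv X ζ ∈ rightHalf := fun ζ hζ =>
    cayInv_mem hX (by simpa using hζ)
  set g : ℂ → ℂ := fun ζ => a * f (cayInv X (q * ζ)) + b * f (cayInv X ζ) with hg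
  have hgm : MapsTo g (ball 0 1) Ω := fun ζ hζ =>
    hconv _ (h.maps_inv (hin _ (hmul hζ))) _ (h.maps_inv (hin _ hζ))
  have hgd : DifferentiableOn ℂ g (ball 0 1) := by
    refine DifferentiableOn.add (DifferentiableOn.const_mul ?_ _)
      (DifferentiableOn.const_mul ?_ _)
    · exact h.diff_inv.comp ((differentiableOn_id.const_mul q).cayInv hmul)
        fun ζ hζ => hin _ (hmul hζ)
    · exact h.diff_inv.comp (differentiableOn_id.cayInv (mapsTo_id _)) fun ζ hζ => hin _ hζ
  have hG : DifferentiableOn ℂ (fun ζ => cay X (φ (g ζ))) (ball 0 1) :=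
    (h.diff.comp hgd hgm).cay hX fun ζ hζ => h.maps (hgm hζ)
  have hG0 : cay X (φ (g 0)) = 0 := by
    have : g 0 = f (cayInv X 0) := by
      simp only [hg, mul_zero]; rw [← add_mul]; norm_cast; rw [hab]; simp
    rw [this, h.right_inv _ (hin 0 (by simp)), cay_cayInv hX (by simp)]
  have := norm_le_norm_of_mapsTo_ball hG (fun ζ hζ => by
    simpa using (norm_cay_lt hX (h.maps (hgm hζ))).le) hG0 hn₂
  have hg2 : g ζ₂ = a * z₁ + b * z₂ := by
    simp only [hg]
    rw [hq, div_mul_cancel₀ _ h0, hfz₁, hfz₂]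
  rwa [hg2] at this

/-- Study's theorem for horodisks at infinity: `{z ∈ Ω | t < Re φ z}` is convex. The hyperbolic
disks centred at `f X` exhaust such a set as `X → ∞`, which in formulas is the identity
`one_sub_sq_cay` in the limit. -/
theorem HalfPlaneChart.study {Ω : Set ℂ} {φ f : ℂ → ℂ} (h : HalfPlaneChart Ω φ f)
    (hc : Convex ℝ Ω) {z₁ z₂ : ℂ} (h₁ : z₁ ∈ Ω) (h₂ : z₂ ∈ Ω)
    {a b : ℝ} (ha : 0 ≤ a) (hb : 0 ≤ b) (hab : a + b = 1) :
    min (φ z₁).re (φ z₂).re ≤ (φ (a * z₁ + b * z₂)).re := by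
  have hz : (a * z₁ + b * z₂ : ℂ) ∈ Ω := by simpa [real_smul] using hc h₁ h₂ ha hb hab
  set w := φ (a * z₁ + b * z₂) with hw
  have hwm : w ∈ rightHalf := h.maps hz
  set s := min (φ z₁).re (φ z₂).re
  -- the ratio `|w + X|² / |v + X|²` tends to `1`
  have hratio : ∀ v ∈ rightHalf, Tendsto (fun X : ℝ => ‖w + X‖ ^ 2 / ‖v + X‖ ^ 2) atTop (𝓝 1) := by
    intro v hv
    have h1 : Tendsto (fun X : ℝ => ‖(w - v) / (v + X) + 1‖ ^ 2) atTop (𝓝 1) := by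
      have : Tendsto (fun X : ℝ => (w - v) / (v + X)) atTop (𝓝 0) := by
        have hlim : Tendsto (fun X : ℝ => ‖w - v‖ / X) atTop (𝓝 0) :=
          tendsto_const_nhds.div_atTop tendsto_id
        refine squeeze_zero_norm' ?_ hlim
        filter_upwards [eventually_gt_atTop 0] with X hX
        have h2 : X ≤ ‖v + X‖ := by
          have hv' : 0 < v.re := hv
          refine le_trans ?_ (re_le_norm _)
          simp; exact hv'.le
        rw [norm_div]
        gcongr
      simpa using ((this.add_const 1).norm.pow 2)
    refine h1.congr' ?_
    filter_upwards [eventually_gt_atTop 0] with X hX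
    have h0 := cay_den_ne hX hv
    rw [← div_pow, ← norm_div]
    congr 2
    field_simp
    ring
  have hv₁ := h.maps h₁
  have hv₂ := h.maps h₂
  have hlim : Tendsto (fun X : ℝ => s * min (‖w + X‖ ^ 2 / ‖φ z₁ + X‖ ^ 2)
      (‖w + X‖ ^ 2 / ‖φ z₂ + X‖ ^ 2)) atTop (𝓝 s) := by
    simpa using ((hratio _ hv₁).min (hratio _ hv₂)).const_mul s
  refine le_of_tendsto hlim ?_
  filter_upwards [eventually_gt_atTop 0] with X hX
  have hs0 : 0 ≤ s := le_min (le_of_lt hv₁) (le_of_lt hv₂)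
  have key : ∀ v ∈ rightHalf, s ≤ v.re → ‖cay X w‖ ≤ ‖cay X v‖ →
      s * (‖w + X‖ ^ 2 / ‖v + X‖ ^ 2) ≤ w.re := by
    intro v hv hsv hle
    have e1 := one_sub_sq_cay hX hwm
    have e2 := one_sub_sq_cay hX hv
    have hp : 0 < ‖v + X‖ ^ 2 := pow_pos (norm_pos_iff.2 (cay_den_ne hX hv)) 2
    have hle2 : ‖cay X w‖ ^ 2 ≤ ‖cay X v‖ ^ 2 := by gcongr
    have h3 : (1 - ‖cay X v‖ ^ 2) * ‖w + X‖ ^ 2 ≤ 4 * X * w.re := by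
      rw [← e1]; gcongr
    have h4 : 4 * X * v.re * ‖w + X‖ ^ 2 ≤ 4 * X * w.re * ‖v + X‖ ^ 2 := by
      rw [← e2]; nlinarith
    have h5 : v.re * ‖w + X‖ ^ 2 ≤ w.re * ‖v + X‖ ^ 2 := by
      have : 0 < 4 * X := by positivity
      nlinarith
    rw [← mul_div_assoc, div_le_iff₀ hp]
    refine le_trans ?_ h5
    gcongr
  rcases le_max_iff.1 (h.study_disk hc hX h₁ h₂ ha hb hab) with h' | h'
  · refine le_trans ?_ (key _ hv₁ (min_le_left _ _) h')
    gcongr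
    exact min_le_left _ _
  · refine le_trans ?_ (key _ hv₂ (min_le_right _ _) h')
    gcongr
    exact min_le_right _ _

/-! ### The normalized conformal map of a symmetric domain -/

/-- The Riemann mapping theorem for convex subdomains of the right half plane, normalized at `1`. -/
theorem exists_diskChart {Ω : Set ℂ} (hΩo : IsOpen Ω) (hc : Convex ℝ Ω)
    (hsub : Ω ⊆ rightHalf) (h1 : (1 : ℂ) ∈ Ω) (h2 : (2 : ℂ) ∈ Ω) :
    ∃ ψ f : ℂ → ℂ, DiskEmbedding Ω 1 ψ ∧ DifferentiableOn ℂ f (ball 0 1) ∧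
      MapsTo f (ball 0 1) Ω ∧ (∀ z ∈ Ω, f (ψ z) = z) ∧ ∀ ζ ∈ ball (0 : ℂ) 1, ψ (f ζ) = ζ := by
  have h₀ : DiskEmbedding Ω 1 (cay 1) :=
    ⟨differentiableOn_id.cay one_pos hsub,
     fun z hz => by simpa using norm_cay_lt one_pos (hsub hz),
     fun x hx y hy hxy => by
      rw [← cayInv_cay one_pos (hsub hx), hxy, cayInv_cay one_pos (hsub hy)],
     by simp [cay]⟩
  have h12 : (1 : ℂ) ≠ 2 := by norm_num
  obtain ⟨ψ, hψ, hmax⟩ := exists_extremal_diskEmbedding hΩo hc.isPreconnected h1 h2 h12 h₀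
  have himg := image_eq_ball_of_extremal hΩo hc h1 h2 h12 hψ hmax
  have hex : ∀ ζ : ℂ, ∃ z, ζ ∈ ball (0 : ℂ) 1 → z ∈ Ω ∧ ψ z = ζ := by
    intro ζ
    by_cases hζ : ζ ∈ ball (0 : ℂ) 1
    · rw [← himg] at hζ
      obtain ⟨z, hz, hzζ⟩ := hζ
      exact ⟨z, fun _ => ⟨hz, hzζ⟩⟩
    · exact ⟨0, fun h => absurd h hζ⟩
  choose f hf using hex
  have hfm : MapsTo f (ball 0 1) Ω := fun ζ hζ => (hf ζ hζ).1
  have hr : ∀ ζ ∈ ball (0 : ℂ) 1, ψ (f ζ) = ζ := fun ζ hζ => (hf ζ hζ).2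
  exact ⟨ψ, f, hψ, differentiableOn_of_rightInverse hΩo hψ.diff isOpen_ball hfm hψ.inj hr hψ.maps,
    hfm, fun z hz => hψ.inj (hfm (hψ.maps hz)) hz (hr _ (hψ.maps hz)), hr⟩

/-- By uniqueness in the Riemann mapping theorem, a Riemann map of a symmetric domain
normalized at a point of the axis maps the axis into a line. -/
theorem diskChart_symm {Ω : Set ℂ} (hΩo : IsOpen Ω)
    (hsym : ∀ z : ℂ, z ∈ Ω ↔ (starRingEnd ℂ) z ∈ Ω) (h1 : (1 : ℂ) ∈ Ω)
    {ψ f : ℂ → ℂ} (hψ : DiskEmbedding Ω 1 ψ) (hf : DifferentiableOn ℂ f (ball 0 1))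
    (hfm : MapsTo f (ball 0 1) Ω) (hl : ∀ z ∈ Ω, f (ψ z) = z)
    (hr : ∀ ζ ∈ ball (0 : ℂ) 1, ψ (f ζ) = ζ) :
    ∃ l : ℂ, ∀ z ∈ Ω, (starRingEnd ℂ) (ψ ((starRingEnd ℂ) z)) = ψ z * l := by
  set G : ℂ → ℂ := fun ζ => (starRingEnd ℂ) (ψ ((starRingEnd ℂ) (f ζ))) with hG
  have hGd : DifferentiableOn ℂ G (ball 0 1) := by
    intro ζ hζ
    have hm : (starRingEnd ℂ) (f ζ) ∈ Ω := (hsym _).1 (hfm hζ)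
    have hd := hψ.diff.differentiableAt (hΩo.mem_nhds hm)
    have := hd.conj_conj
    rw [conj_conj] at this
    exact (DifferentiableAt.comp ζ this
      (hf.differentiableAt (isOpen_ball.mem_nhds hζ))).differentiableWithinAt
  have hGm : MapsTo G (ball 0 1) (ball 0 1) := fun ζ hζ => by
    simpa [hG] using hψ.norm_lt ((hsym _).1 (hfm hζ))
  have hf0 : f 0 = 1 := by rw [← hψ.base, hl 1 h1]
  have hG0 : G 0 = 0 := by simp [hG, hf0, hψ.base]
  have hle : ∀ z ∈ Ω, ‖ψ ((starRingEnd ℂ) z)‖ ≤ ‖ψ z‖ := by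
    intro z hz
    have := norm_le_norm_of_mapsTo_ball hGd (hGm.mono_right ball_subset_closedBall) hG0
      (hψ.norm_lt hz)
    simpa [hG, hl z hz] using this
  have heq : ∀ z ∈ Ω, ‖ψ ((starRingEnd ℂ) z)‖ = ‖ψ z‖ := fun z hz =>
    le_antisymm (hle z hz) (by simpa using hle _ ((hsym z).1 hz))
  have hhalf : (1 / 2 : ℂ) ∈ ball (0 : ℂ) 1 := by simp; norm_num
  have haff := affine_of_mapsTo_ball_of_norm_dslope_eq_div (R₂ := 1) hGd
    (by rw [hG0]; exact hGm.mono_right ball_subset_closedBall) hhalf (by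
      have h0 : (1 / 2 : ℂ) ≠ 0 := by norm_num
      have : ‖G (1 / 2)‖ = ‖(1 / 2 : ℂ)‖ := by
        simp only [hG, RCLike.norm_conj]
        rw [heq _ (hfm hhalf), hr _ hhalf]
      rw [dslope_of_ne _ h0, slope_def_field, hG0, sub_zero, sub_zero, norm_div, this]
      simp)
  refine ⟨dslope G 0 (1 / 2), fun z hz => ?_⟩
  have := haff (hψ.maps hz)
  simpa [hf0, hψ.base, hG, hl z hz] using this

/-- A half plane chart that tends to `+∞` along the positive axis. After a rotation the disk chart is
real on the axis, positive to the right of `1`, and leaves every compact subset of the disk, so it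
tends to `1`; the inverse Cayley transform sends `1` to infinity. -/
theorem exists_symmetric_chart {Ω : Set ℂ} (hΩo : IsOpen Ω) (hc : Convex ℝ Ω)
    (hsub : Ω ⊆ rightHalf) (haxis : ∀ x : ℝ, 0 < x → (x : ℂ) ∈ Ω)
    (hsym : ∀ z : ℂ, z ∈ Ω ↔ (starRingEnd ℂ) z ∈ Ω) :
    ∃ φ f : ℂ → ℂ, HalfPlaneChart Ω φ f ∧ Tendsto (fun x : ℝ => (φ x).re) atTop atTop := by
  have h1 : (1 : ℂ) ∈ Ω := by simpa using haxis 1 one_pos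
  have h2 : (2 : ℂ) ∈ Ω := by simpa using haxis 2 two_pos
  obtain ⟨ψ, f, hψ, hf, hfm, hl, hr⟩ := exists_diskChart hΩo hc hsub h1 h2
  obtain ⟨l, hl'⟩ := diskChart_symm hΩo hsym h1 hψ hf hfm hl hr
  have hψ2 : ψ 2 ≠ 0 := fun h => by
    have := hψ.inj h2 h1 (by rw [h, hψ.base])
    norm_num at this
  -- rotate so that the value at `2` is positive
  set μ : ℂ := (starRingEnd ℂ) (ψ 2) / ‖ψ 2‖ with hμ
  have hn2 : (‖ψ 2‖ : ℂ) ≠ 0 := by simpa using hψ2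
  have hμ1 : ‖μ‖ = 1 := by
    rw [hμ, norm_div, RCLike.norm_conj, norm_real, norm_norm, div_self (norm_ne_zero_iff.2 hψ2)]
  have hμ0 : μ ≠ 0 := norm_ne_zero_iff.1 (by rw [hμ1]; exact one_ne_zero)
  have him : ∀ x : ℝ, 0 < x → (μ * ψ x).im = 0 := by
    intro x hx
    have e1 := hl' x (haxis x hx)
    have e2 := hl' 2 h2
    rw [conj_ofReal] at e1
    have e3 : (starRingEnd ℂ) (2 : ℂ) = 2 := by simpa using conj_ofReal 2
    rw [e3] at e2
    rw [← conj_eq_iff_im, hμ, map_mul, map_div₀, conj_conj, conj_ofReal, e1, e2]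
    ring
  have h2pos : 0 < (μ * ψ 2).re := by
    have : μ * ψ 2 = (‖ψ 2‖ : ℂ) := by
      rw [hμ, div_mul_eq_mul_div, mul_comm, mul_conj, div_eq_iff hn2, normSq_eq_norm_sq]
      push_cast; ring
    rw [this, ofReal_re]; exact norm_pos_iff.2 hψ2
  have hcr : ContinuousOn (fun x : ℝ => (μ * ψ x).re) (Ioi 0) := by
    refine continuous_re.comp_continuousOn (continuousOn_const.mul ?_)
    exact hψ.diff.continuousOn.comp continuous_ofReal.continuousOn fun x hx => haxis x hx
  have hne : ∀ x : ℝ, 1 < x → (μ * ψ x).re ≠ 0 := by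
    intro x hx h
    have h3 : μ * ψ x = 0 := Complex.ext h (him x (by linarith))
    have h4 : ψ x = 0 := (mul_eq_zero.1 h3).resolve_left hμ0
    have := hψ.inj (haxis x (by linarith)) h1 (by rw [h4, hψ.base])
    have : x = 1 := by exact_mod_cast this
    linarith
  have hposx : ∀ x : ℝ, 1 < x → 0 < (μ * ψ x).re := by
    intro x hx
    by_contra hcon
    have hsubset : uIcc x 2 ⊆ Ioi 0 := fun y hy => by
      have := hy.1
      have h5 : 1 < min x 2 := lt_min hx (by norm_num)
      exact lt_trans one_pos (lt_of_lt_of_le h5 this)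
    obtain ⟨y, hy, hy0⟩ := intermediate_value_uIcc (hcr.mono hsubset)
      (show (0 : ℝ) ∈ uIcc _ _ from by
        rw [mem_uIcc]; left; exact ⟨not_lt.1 hcon, by exact_mod_cast h2pos.le⟩)
    exact hne y (lt_of_lt_of_le (lt_min hx (by norm_num)) hy.1) hy0
  have hψm : MapsTo (fun z => μ * ψ z) Ω (ball 0 1) := fun z hz => by
    simpa [hμ1] using hψ.norm_lt hz
  have hμm : MapsTo (fun w => μ⁻¹ * cay 1 w) rightHalf (ball 0 1) := fun w hw => by
    simpa [hμ1] using norm_cay_lt one_pos hw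
  refine ⟨fun z => cayInv 1 (μ * ψ z), fun w => f (μ⁻¹ * cay 1 w), ⟨?_, ?_, ?_, ?_, ?_, ?_⟩, ?_⟩
  · exact (hψ.diff.const_mul μ).cayInv hψm
  · exact hf.comp ((differentiableOn_id.cay one_pos (mapsTo_id _)).const_mul _) hμm
  · exact fun z hz => cayInv_mem one_pos (by simpa using hψm hz)
  · exact fun w hw => hfm (hμm hw)
  · intro z hz
    rw [cay_cayInv one_pos (by simpa using hψm hz), inv_mul_cancel_left₀ hμ0, hl z hz]
  · intro w hw
    rw [hr _ (hμm hw), mul_inv_cancel_left₀ hμ0, cayInv_cay one_pos hw]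
  · rw [Filter.tendsto_atTop]
    intro M
    set N := max M 1 with hN
    have hN1 : 1 ≤ N := le_max_right _ _
    -- `ψ x` leaves every compact part of the disk
    have hK : IsCompact (f '' closedBall 0 (1 - 1 / (2 * N))) :=
      (isCompact_closedBall _ _).image_of_continuousOn
        (hf.continuousOn.mono (closedBall_subset_ball (by
          have : 0 < 1 / (2 * N) := by positivity
          linarith)))
    obtain ⟨C, hC⟩ := hK.isBounded.exists_norm_le
    filter_upwards [eventually_gt_atTop C, eventually_gt_atTop 1] with x hxC hx1
    have hx0 : 0 < x := by linarith
    have hxΩ := haxis x hx0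
    have hlt : ‖μ * ψ x‖ < 1 := by simpa using hψm hxΩ
    have hgt : 1 - 1 / (2 * N) < ‖μ * ψ x‖ := by
      by_contra hcon
      rw [norm_mul, hμ1, one_mul] at hcon
      have := hC (x : ℂ) ⟨ψ x, by simpa using hcon, hl _ hxΩ⟩
      rw [norm_real, Real.norm_of_nonneg hx0.le] at this
      linarith
    have hreal : μ * ψ x = ((μ * ψ x).re : ℂ) := Complex.ext (by simp) (by simpa using him x hx0)
    set t := (μ * ψ x).re
    have ht : 0 < t := hposx x hx1
    rw [hreal] at hlt hgt
    rw [norm_real, Real.norm_of_nonneg ht.le] at hlt hgt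
    rw [re_cayInv (by rw [hreal, norm_real, Real.norm_of_nonneg ht.le]; exact hlt), hreal,
      ← ofReal_one, ← ofReal_sub, norm_real, norm_real, Real.norm_of_nonneg ht.le,
      Real.norm_of_nonneg (by linarith), one_mul]
    refine (le_max_left M 1).trans ?_
    have hN0 : 0 < N := by linarith
    have h5 : (1 - t) * N ≤ 1 := by
      have : 1 - t < 1 / (2 * N) := by linarith
      calc (1 - t) * N ≤ 1 / (2 * N) * N := by gcongr
        _ = 1 / 2 := by field_simp
        _ ≤ 1 := by norm_num
    rw [le_div_iff₀ (by nlinarith)]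
    nlinarith [mul_pos ht (sub_pos.2 hlt)]

/-! ### Monotonicity and boundary behaviour -/

/-- A convex domain containing the positive axis is stable under translation to the right. -/
theorem add_mem_of_axis {Ω : Set ℂ} (hΩo : IsOpen Ω) (hc : Convex ℝ Ω)
    (haxis : ∀ x : ℝ, 0 < x → (x : ℂ) ∈ Ω) {z : ℂ} (hz : z ∈ Ω) {s : ℝ} (hs : 0 ≤ s) :
    z + s ∈ Ω := by
  have hlam : Tendsto (fun X : ℝ => s / X) atTop (𝓝 0) := tendsto_const_nhds.div_atTop tendsto_id
  have h1 : Tendsto (fun X : ℝ => z / ((1 - s / X : ℝ) : ℂ)) atTop (𝓝 z) := by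
    have : Tendsto (fun X : ℝ => ((1 - s / X : ℝ) : ℂ)) atTop (𝓝 ((1 - 0 : ℝ) : ℂ)) :=
      (continuous_ofReal.tendsto _).comp (hlam.const_sub 1)
    have h2 := (tendsto_const_nhds (x := z)).div this (by simp)
    rw [sub_zero, ofReal_one, div_one] at h2
    exact h2
  obtain ⟨X, hX1, hX2, hX3⟩ := ((h1.eventually (hΩo.mem_nhds hz)).and
    ((eventually_gt_atTop 0).and (eventually_gt_atTop s))).exists
  have hl : s / X < 1 := (div_lt_one hX2).2 hX3
  have := hc hX1 (haxis X hX2) (sub_nonneg.2 hl.le) (by positivity : 0 ≤ s / X) (by ring)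
  rw [real_smul, real_smul, mul_div_cancel₀ _ (by
    have : (1 - s / X) ≠ 0 := by linarith
    exact_mod_cast this)] at this
  convert this using 2
  rw [← ofReal_mul, div_mul_cancel₀ _ hX2.ne']

/-- `Re φ` increases along horizontal rays: apply Study's theorem to `z` and a far point `X` of the
axis, and let `X → ∞`. -/
theorem HalfPlaneChart.re_le_re_add {Ω : Set ℂ} {φ f : ℂ → ℂ} (h : HalfPlaneChart Ω φ f)
    (hΩo : IsOpen Ω) (hc : Convex ℝ Ω) (haxis : ∀ x : ℝ, 0 < x → (x : ℂ) ∈ Ω)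
    (htop : Tendsto (fun x : ℝ => (φ x).re) atTop atTop) {z : ℂ} (hz : z ∈ Ω) {s : ℝ}
    (hs : 0 ≤ s) : (φ z).re ≤ (φ (z + s)).re := by
  have hlam : Tendsto (fun X : ℝ => s / X) atTop (𝓝 0) := tendsto_const_nhds.div_atTop tendsto_id
  have h1 : Tendsto (fun X : ℝ => ((1 - s / X : ℝ) : ℂ) * z + s) atTop (𝓝 (z + s)) := by
    have : Tendsto (fun X : ℝ => ((1 - s / X : ℝ) : ℂ)) atTop (𝓝 ((1 - 0 : ℝ) : ℂ)) :=
      (continuous_ofReal.tendsto _).comp (hlam.const_sub 1)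
    simpa using (this.mul_const z).add_const (s : ℂ)
  have hzs := add_mem_of_axis hΩo hc haxis hz hs
  have hca : ContinuousAt φ (z + s) :=
    (h.diff.differentiableAt (hΩo.mem_nhds hzs)).continuousAt
  refine ge_of_tendsto (((continuous_re.tendsto _).comp hca.tendsto).comp h1) ?_
  filter_upwards [eventually_gt_atTop 0, eventually_gt_atTop s, htop.eventually_ge_atTop (φ z).re]
    with X hX0 hXs hX
  have hl : s / X < 1 := (div_lt_one hX0).2 hXs
  have := h.study hc hz (haxis X hX0) (sub_nonneg.2 hl.le) (by positivity : 0 ≤ s / X) (by ring)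
  rw [min_eq_left hX, ← ofReal_mul, div_mul_cancel₀ _ hX0.ne'] at this
  exact this

theorem HalfPlaneChart.re_deriv_nonneg {Ω : Set ℂ} {φ f : ℂ → ℂ} (h : HalfPlaneChart Ω φ f)
    (hΩo : IsOpen Ω) (hc : Convex ℝ Ω) (haxis : ∀ x : ℝ, 0 < x → (x : ℂ) ∈ Ω)
    (htop : Tendsto (fun x : ℝ => (φ x).re) atTop atTop) {z : ℂ} (hz : z ∈ Ω) :
    0 ≤ (deriv φ z).re := by
  have hd := (h.diff.differentiableAt (hΩo.mem_nhds hz)).hasDerivAt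
  have hd1 : HasDerivAt (fun s : ℂ => φ (z + s)) (deriv φ z) ((0 : ℝ) : ℂ) := by
    rw [ofReal_zero]
    refine HasDerivAt.comp_const_add z 0 ?_
    simpa using hd
  have hd2 : HasDerivAt (fun s : ℝ => (φ (z + s)).re) (deriv φ z).re 0 := hd1.real_of_complex
  rw [hasDerivAt_iff_tendsto_slope] at hd2
  refine ge_of_tendsto (hd2.mono_left (nhdsWithin_mono _ (fun x hx => ne_of_gt hx) :
    𝓝[>] (0 : ℝ) ≤ 𝓝[≠] 0)) ?_
  filter_upwards [self_mem_nhdsWithin] with s hs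
  have hs : 0 < s := hs
  rw [slope_def_field]
  have := h.re_le_re_add hΩo hc haxis htop hz hs.le
  refine div_nonneg ?_ (by simpa using hs.le)
  simpa using this

/-- The real part of the inverse map increases along horizontal rays, because `Re f'` is
`Re (1 / φ')`, which has the sign of `Re φ'`. -/
theorem HalfPlaneChart.re_inv_le_re_inv_add {Ω : Set ℂ} {φ f : ℂ → ℂ} (h : HalfPlaneChart Ω φ f)
    (hΩo : IsOpen Ω) (hc : Convex ℝ Ω) (haxis : ∀ x : ℝ, 0 < x → (x : ℂ) ∈ Ω)
    (htop : Tendsto (fun x : ℝ => (φ x).re) atTop atTop) {w : ℂ} (hw : w ∈ rightHalf) {s : ℝ}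
    (hs : 0 ≤ s) : (f w).re ≤ (f (w + s)).re := by
  have hws : ∀ t : ℝ, 0 ≤ t → w + t ∈ rightHalf := fun t ht => by
    have hw' : 0 < w.re := hw
    change 0 < (w + t).re
    simp; linarith
  have hder : ∀ t : ℝ, 0 ≤ t → HasDerivAt (fun s : ℝ => (f (w + s)).re) (deriv f (w + t)).re t := by
    intro t ht
    have hd := (h.diff_inv.differentiableAt (isOpen_rightHalf.mem_nhds (hws t ht))).hasDerivAt
    exact (HasDerivAt.comp_const_add w (t : ℂ) hd).real_of_complex
  have hmono : MonotoneOn (fun s : ℝ => (f (w + s)).re) (Ici 0) := by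
    refine monotoneOn_of_deriv_nonneg (convex_Ici 0)
      (fun t ht => (hder t ht).continuousAt.continuousWithinAt)
      (fun t ht => ?_) (fun t ht => ?_)
    · rw [interior_Ici] at ht
      exact (hder t (le_of_lt ht)).differentiableAt.differentiableWithinAt
    rw [interior_Ici] at ht
    have ht : 0 ≤ t := le_of_lt ht
    rw [(hder t ht).deriv]
    set v := w + t with hv
    have hvm := hws t ht
    have hd1 := (h.diff.differentiableAt (hΩo.mem_nhds (h.maps_inv hvm))).hasDerivAt
    have hd2 := (h.diff_inv.differentiableAt (isOpen_rightHalf.mem_nhds hvm)).hasDerivAt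
    have hd3 : HasDerivAt id (deriv φ (f v) * deriv f v) v := by
      refine (hd1.comp v hd2).congr_of_eventuallyEq ?_
      filter_upwards [isOpen_rightHalf.mem_nhds hvm] with y hy
      exact (h.right_inv y hy).symm
    have h1 : deriv φ (f v) * deriv f v = 1 := hd3.unique (hasDerivAt_id v)
    have h2 : deriv f v = (deriv φ (f v))⁻¹ := eq_inv_of_mul_eq_one_right h1
    rw [h2, inv_re]
    exact div_nonneg (h.re_deriv_nonneg hΩo hc haxis htop (h.maps_inv hvm)) (normSq_nonneg _)
  simpa using hmono (self_mem_Ici) (mem_Ici.2 hs) hs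

/-- If the part of the domain in some vertical strip is unbounded, the domain is the whole half
plane. -/
theorem eq_rightHalf_of_unbounded_strip {Ω : Set ℂ} (hΩo : IsOpen Ω) (hc : Convex ℝ Ω)
    (hsub : Ω ⊆ rightHalf) (haxis : ∀ x : ℝ, 0 < x → (x : ℂ) ∈ Ω)
    (hsym : ∀ z : ℂ, z ∈ Ω ↔ (starRingEnd ℂ) z ∈ Ω) {C : ℝ}
    (hub : ∀ B : ℝ, ∃ z ∈ Ω, z.re ≤ C ∧ B < |z.im|) : Ω = rightHalf := by
  refine hsub.antisymm fun z₀ hz₀ => ?_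
  wlog hy : 0 ≤ z₀.im generalizing z₀
  · rw [hsym]
    refine this _ ?_ ?_
    · change 0 < ((starRingEnd ℂ) z₀).re
      rw [conj_re]; exact hz₀
    · rw [conj_im]; linarith
  have hx : 0 < z₀.re := hz₀
  -- high enough for the segment from `Re z₀ / 2` to `z` to pass to the left of `z₀` at its height
  obtain ⟨z, hz, hzC, hzB⟩ := hub (z₀.im + 2 * z₀.im * |C| / z₀.re)
  wlog him : 0 ≤ z.im generalizing z
  · exact this _ ((hsym z).1 hz) (by rwa [conj_re]) (by rwa [conj_im, abs_neg])
      (by rw [conj_im]; linarith)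
  rw [abs_of_nonneg him] at hzB
  have hp : 0 ≤ 2 * z₀.im * |C| / z₀.re := by positivity
  have him0 : 0 < z.im := by linarith
  set l := z₀.im / z.im with hl
  have hl0 : 0 ≤ l := by positivity
  have hl1 : l ≤ 1 := (div_le_one him0).2 (by linarith)
  have hlC : l * |C| ≤ z₀.re / 2 := by
    rw [hl, div_mul_eq_mul_div, div_le_iff₀ him0]
    have : 2 * z₀.im * |C| / z₀.re ≤ z.im := by linarith
    rw [div_le_iff₀ hx] at this
    linarith
  have hmem := hc (haxis (z₀.re / 2) (by positivity)) hz (sub_nonneg.2 hl1) hl0 (by ring)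
  rw [real_smul, real_smul] at hmem
  set v : ℂ := ((1 - l : ℝ) : ℂ) * ((z₀.re / 2 : ℝ) : ℂ) + l * z with hv
  have hvim : v.im = z₀.im := by
    rw [hv, ← ofReal_mul, add_im, ofReal_im, im_ofReal_mul, zero_add, hl, div_mul_cancel₀ _ him0.ne']
  have hvre : v.re ≤ z₀.re := by
    rw [hv, ← ofReal_mul, add_re, ofReal_re, re_ofReal_mul]
    have : l * z.re ≤ l * |C| := by gcongr; exact hzC.trans (le_abs_self C)
    nlinarith
  have := add_mem_of_axis hΩo hc haxis hmem (sub_nonneg.2 hvre)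
  convert this using 1
  apply Complex.ext
  · simp
  · simp [hvim]

/-- A chart whose inverse is bounded on bounded sets, so that only infinity is sent to infinity. By
monotonicity `Re f` is bounded on `‖w‖ ≤ M` by its maximum over a compact segment of the line
`Re w = M + 1`, and `Im f` is then controlled by the width of `Ω` over the strip. -/
theorem exists_chart_bounded {Ω : Set ℂ} (hΩo : IsOpen Ω) (hc : Convex ℝ Ω)
    (hsub : Ω ⊆ rightHalf) (haxis : ∀ x : ℝ, 0 < x → (x : ℂ) ∈ Ω)
    (hsym : ∀ z : ℂ, z ∈ Ω ↔ (starRingEnd ℂ) z ∈ Ω) :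
    ∃ φ f : ℂ → ℂ, HalfPlaneChart Ω φ f ∧
      ∀ M : ℝ, ∃ C : ℝ, ∀ w ∈ rightHalf, ‖w‖ ≤ M → ‖f w‖ ≤ C := by
  by_cases hH : Ω = rightHalf
  · subst hH
    exact ⟨id, id, ⟨differentiableOn_id, differentiableOn_id, mapsTo_id _, mapsTo_id _,
      fun _ _ => rfl, fun _ _ => rfl⟩, fun M => ⟨M, fun w _ h => h⟩⟩
  obtain ⟨φ, f, h, htop⟩ := exists_symmetric_chart hΩo hc hsub haxis hsym
  refine ⟨φ, f, h, fun M => ?_⟩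
  -- the line `Re w = M + 1` lies to the right of every point with `‖w‖ ≤ M`
  have hK : IsCompact ((fun y : ℝ => f ((M + 1 : ℝ) + y * I)) '' Icc (-M) M) := by
    refine isCompact_Icc.image_of_continuousOn ?_
    refine h.diff_inv.continuousOn.comp (by fun_prop) fun y hy => ?_
    change 0 < (((M + 1 : ℝ) : ℂ) + y * I).re
    have := hy.1.trans hy.2
    simp; linarith
  obtain ⟨C, hC⟩ := hK.isBounded.exists_norm_le
  have hre : ∀ w ∈ rightHalf, ‖w‖ ≤ M → (f w).re ≤ C := by
    intro w hw hwM
    have h1 := (re_le_norm w).trans hwM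
    have h2 := (abs_im_le_norm w).trans hwM
    refine (h.re_inv_le_re_inv_add hΩo hc haxis htop hw
      (show 0 ≤ M + 1 - w.re by linarith)).trans ((re_le_norm _).trans
        (hC _ ⟨w.im, abs_le.1 h2, ?_⟩))
    change f _ = f _
    congr 1
    apply Complex.ext <;> simp
  obtain ⟨B, hB⟩ : ∃ B : ℝ, ∀ z ∈ Ω, z.re ≤ C → |z.im| ≤ B := by
    by_contra! hcon
    exact hH (eq_rightHalf_of_unbounded_strip hΩo hc hsub haxis hsym hcon)
  refine ⟨C + B, fun w hw hwM => ?_⟩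
  have h0 : 0 < (f w).re := hsub (h.maps_inv hw)
  refine (norm_le_abs_re_add_abs_im _).trans (add_le_add ?_ ?_)
  · rw [abs_of_pos h0]; exact hre w hw hwM
  · exact hB _ (h.maps_inv hw) (hre w hw hwM)

/-! ### Harmonic functions -/

open InnerProductSpace in
theorem harmonicOnNhd_of_laplacian {Ω : Set ℂ} (hΩo : IsOpen Ω) {u : ℂ → ℝ}
    (hu2 : ContDiffOn ℝ 2 u Ω)
    (hharm : ∀ z ∈ Ω,
      iteratedFDerivWithin ℝ 2 u Ω z ![(1 : ℂ), (1 : ℂ)]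
      + iteratedFDerivWithin ℝ 2 u Ω z ![Complex.I, Complex.I] = 0) : HarmonicOnNhd u Ω := by
  intro z hz
  refine ⟨hu2.contDiffAt (hΩo.mem_nhds hz), ?_⟩
  filter_upwards [hΩo.mem_nhds hz] with w hw
  rw [laplacian_eq_iteratedFDeriv_complexPlane, Pi.zero_apply, ← hharm w hw,
    iteratedFDerivWithin_of_isOpen 2 hΩo hw]

open InnerProductSpace in
/-- Harmonicity is preserved by holomorphic changes of variable. -/
theorem harmonicOnNhd_comp {Ω D : Set ℂ} (hΩo : IsOpen Ω) (hD : IsOpen D) {u : ℂ → ℝ} {g : ℂ → ℂ}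
    (hu : HarmonicOnNhd u Ω) (hg : DifferentiableOn ℂ g D) (hm : MapsTo g D Ω) :
    HarmonicOnNhd (fun ζ => u (g ζ)) D := by
  intro ζ hζ
  obtain ⟨R, hR, hb⟩ := Metric.isOpen_iff.1 hΩo _ (hm hζ)
  obtain ⟨F, hF, hFe⟩ := HarmonicOnNhd.exists_analyticOnNhd_ball_re_eq (hu.mono hb)
  have hga : AnalyticAt ℂ g ζ := hg.analyticOnNhd hD ζ hζ
  have h1 : AnalyticAt ℂ (fun y => F (g y)) ζ := (hF _ (mem_ball_self hR)).comp hga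
  refine (harmonicAt_congr_nhds ?_).1 h1.harmonicAt_re
  filter_upwards [hga.continuousAt.eventually (ball_mem_nhds _ hR)] with y hy
  exact hFe hy

open InnerProductSpace in
/-- A nonnegative harmonic function on the disk whose boundary values vanish away from `1`
is a multiple of the Poisson kernel at `1`. -/
theorem eq_poisson_of_vanishing {V : ℂ → ℝ} (hV : HarmonicOnNhd V (ball 0 1))
    (h0 : ∀ ζ ∈ ball (0 : ℂ) 1, 0 ≤ V ζ)
    (hvan : ∀ δ > 0, ∀ ε > 0, ∃ r < 1, ∀ ζ : ℂ, r ≤ ‖ζ‖ → ‖ζ‖ < 1 → δ ≤ ‖ζ - 1‖ → V ζ ≤ ε)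
    {ζ : ℂ} (hζ : ‖ζ‖ < 1) : V ζ = V 0 * ((1 - ‖ζ‖ ^ 2) / ‖1 - ζ‖ ^ 2) := by
  set P : ℂ → ℝ := poissonKernel 0 ζ with hP
  set a := (1 - ‖ζ‖ ^ 2) / ‖1 - ζ‖ ^ 2 with ha
  have hPv : ∀ ξ, P ξ = (‖ξ‖ ^ 2 - ‖ζ‖ ^ 2) / ‖ξ - ζ‖ ^ 2 := fun ξ => by
    rw [hP, poissonKernel_def]; simp
  have hPcont : ∀ ξ, ξ ≠ ζ → ContinuousAt P ξ := by
    intro ξ hξ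
    have : P = fun ξ => (‖ξ‖ ^ 2 - ‖ζ‖ ^ 2) / ‖ξ - ζ‖ ^ 2 := funext hPv
    rw [this]
    have h : ‖ξ - ζ‖ ^ 2 ≠ 0 := pow_ne_zero 2 (norm_ne_zero_iff.2 (sub_ne_zero.2 hξ))
    fun_prop (disch := exact h)
  have hζ1 : (1 : ℂ) ≠ ζ := sub_ne_zero.1 (one_sub_ne hζ)
  set B := 1 / ((1 - ‖ζ‖) / 2) ^ 2 + |a| with hB
  have hd : 0 < 1 - ‖ζ‖ := sub_pos.2 hζ
  have hB0 : 0 < B := by positivity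
  have hbound : ∀ ξ : ℂ, (1 + ‖ζ‖) / 2 ≤ ‖ξ‖ → ‖ξ‖ < 1 → |P ξ - a| ≤ B := by
    intro ξ h1 h2
    refine (abs_sub _ _).trans (add_le_add ?_ le_rfl)
    have h3 : (1 - ‖ζ‖) / 2 ≤ ‖ξ - ζ‖ := by
      have := norm_sub_norm_le ξ ζ
      linarith
    have h4 : ‖ζ‖ ^ 2 ≤ ‖ξ‖ ^ 2 := by gcongr; linarith
    rw [hPv, abs_of_nonneg (div_nonneg (by linarith) (by positivity))]
    have h5 : ‖ξ‖ ^ 2 - ‖ζ‖ ^ 2 ≤ 1 := by nlinarith [norm_nonneg ξ, sq_nonneg ‖ζ‖]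
    gcongr
  -- Poisson formula on a circle of radius `r` close to `1`: the kernel is close to `a` near `1`, and
  -- elsewhere on the circle `V` is small while the kernel stays bounded
  have key : ∀ η > 0, |V ζ - a * V 0| ≤ η * V 0 + η := by
    intro η hη
    have hPa : P 1 = a := by rw [hPv, norm_one, one_pow]
    obtain ⟨δ, hδ, hδP⟩ := Metric.continuousAt_iff.1 (hPcont 1 hζ1) η hη
    obtain ⟨r₀, hr₀, hr⟩ := hvan δ hδ (η / B) (by positivity)
    obtain ⟨r, hr1, hr2⟩ := exists_between (max_lt hr₀ (show (1 + ‖ζ‖) / 2 < 1 by linarith))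
    have hrr : r₀ ≤ r := (le_max_left _ _).trans hr1.le
    have hrζ : (1 + ‖ζ‖) / 2 ≤ r := (le_max_right _ _).trans hr1.le
    have hr0 : 0 < r := lt_of_lt_of_le (by positivity) hrζ
    have hζr : ‖ζ‖ < r := by linarith
    have hsub : closedBall (0 : ℂ) r ⊆ ball 0 1 := closedBall_subset_ball hr2
    have hVr := hV.mono hsub
    have hpw : ∀ ξ ∈ sphere (0 : ℂ) r, |P ξ * V ξ - a * V ξ| ≤ η * V ξ + η := by
      intro ξ hξ
      have hn : ‖ξ‖ = r := by simpa using hξ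
      have hV0 : 0 ≤ V ξ := h0 ξ (hsub (sphere_subset_closedBall hξ))
      rw [← sub_mul, abs_mul, abs_of_nonneg hV0]
      by_cases hc : ‖ξ - 1‖ < δ
      · have := hδP (x := ξ) (by rwa [dist_eq_norm])
        rw [hPa, Real.dist_eq] at this
        nlinarith
      · have h1 := hr ξ (by rw [hn]; exact hrr) (by rw [hn]; exact hr2) (not_lt.1 hc)
        have h2 := hbound ξ (by rw [hn]; exact hrζ) (by rw [hn]; exact hr2)
        have h3 : |P ξ - a| * V ξ ≤ B * (η / B) := by gcongr
        rw [mul_div_cancel₀ _ hB0.ne'] at h3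
        nlinarith
    have hPois : Real.circleAverage (P • V) 0 r = V ζ :=
      hVr.circleAverage_poissonKernel_smul (by simpa using hζr)
    have hmean : ∀ s t : ℝ, Real.circleAverage (s • V + fun _ => t) 0 r = s * V 0 + t := by
      intro s t
      have hh : HarmonicOnNhd (s • V + fun _ => t) (closedBall 0 |r|) := by
        rw [abs_of_pos hr0]
        exact hVr.const_smul.add (harmonicOnNhd_const t)
      rw [hh.circleAverage_eq]
      simp
    have hVc : ContinuousOn V (sphere 0 r) := hVr.continuousOn.mono sphere_subset_closedBall
    have hi1 : CircleIntegrable (P • V) 0 r := by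
      refine ContinuousOn.circleIntegrable hr0.le (ContinuousOn.smul ?_ hVc)
      intro ξ hξ
      refine (hPcont ξ ?_).continuousWithinAt
      rintro rfl
      have : ‖ξ‖ = r := by simpa using hξ
      linarith
    have hi2 : ∀ s t : ℝ, CircleIntegrable (s • V + fun _ => t) 0 r := fun s t =>
      ContinuousOn.circleIntegrable hr0.le ((hVc.const_smul s).add continuousOn_const)
    have hle1 := Real.circleAverage_mono hi1 (hi2 (a + η) η) (by
      rw [abs_of_pos hr0]
      intro ξ hξ
      have := (abs_le.1 (hpw ξ hξ)).2
      simp only [Pi.add_apply, Pi.smul_apply, Pi.smul_apply', smul_eq_mul]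
      linarith)
    have hle2 := Real.circleAverage_mono (hi2 (a - η) (-η)) hi1 (by
      rw [abs_of_pos hr0]
      intro ξ hξ
      have := (abs_le.1 (hpw ξ hξ)).1
      simp only [Pi.add_apply, Pi.smul_apply, Pi.smul_apply', smul_eq_mul]
      linarith)
    rw [hPois, hmean] at hle1 hle2
    rw [abs_le]
    constructor <;> linarith
  have hlim : Tendsto (fun η : ℝ => η * V 0 + η) (𝓝[>] 0) (𝓝 0) := by
    have : Tendsto (fun η : ℝ => η * V 0 + η) (𝓝 0) (𝓝 (0 * V 0 + 0)) :=
      Continuous.tendsto (by fun_prop) 0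
    simpa using this.mono_left nhdsWithin_le_nhds
  have := ge_of_tendsto hlim (by filter_upwards [self_mem_nhdsWithin] with η hη using key η hη)
  have := abs_nonpos_iff.1 this
  linarith

/-- A Martin function is a multiple of `Re φ`. In disk coordinates it is a nonnegative harmonic
function that is small near every boundary point other than `1`: the set where `u ≥ ε` and
`‖z‖ ≤ C` is compact in `Ω`, since `u` vanishes on the frontier. -/
theorem HalfPlaneChart.eq_mul_re {Ω : Set ℂ} {φ f : ℂ → ℂ} (h : HalfPlaneChart Ω φ f)
    (hΩo : IsOpen Ω) (hbdd : ∀ M : ℝ, ∃ C : ℝ, ∀ w ∈ rightHalf, ‖w‖ ≤ M → ‖f w‖ ≤ C)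
    {u : ℂ → ℝ} (hpos : ∀ z ∈ Ω, 0 < u z) (hu : InnerProductSpace.HarmonicOnNhd u Ω)
    (hcont : ContinuousOn u (closure Ω)) (hzero : ∀ z ∈ frontier Ω, u z = 0) {z : ℂ}
    (hz : z ∈ Ω) : u z = u (f 1) * (φ z).re := by
  have hin : MapsTo (cayInv 1) (ball 0 1) rightHalf := fun ζ hζ =>
    cayInv_mem one_pos (by simpa using hζ)
  have hgm : MapsTo (fun ζ => f (cayInv 1 ζ)) (ball 0 1) Ω := fun ζ hζ => h.maps_inv (hin hζ)
  have hgd : DifferentiableOn ℂ (fun ζ => f (cayInv 1 ζ)) (ball 0 1) :=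
    h.diff_inv.comp (differentiableOn_id.cayInv (mapsTo_id _)) hin
  have hV := harmonicOnNhd_comp hΩo isOpen_ball hu hgd hgm
  have hvan : ∀ δ > 0, ∀ ε > 0, ∃ r < 1, ∀ ζ : ℂ, r ≤ ‖ζ‖ → ‖ζ‖ < 1 → δ ≤ ‖ζ - 1‖ →
      u (f (cayInv 1 ζ)) ≤ ε := by
    intro δ hδ ε hε
    obtain ⟨C, hC⟩ := hbdd (2 / δ)
    set K : Set ℂ := {z ∈ closure Ω | ε ≤ u z} ∩ closedBall 0 C with hK
    have hKc : IsCompact K := by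
      refine (isCompact_closedBall (0 : ℂ) C).inter_left ?_
      exact hcont.preimage_isClosed_of_isClosed isClosed_closure isClosed_Ici
    have hKΩ : K ⊆ Ω := by
      rintro z ⟨⟨hz1, hz2⟩, -⟩
      by_contra hzn
      have : z ∈ frontier Ω := ⟨hz1, by rwa [hΩo.interior_eq]⟩
      rw [hzero z this] at hz2
      linarith
    have hcK : ContinuousOn (fun z => cay 1 (φ z)) K :=
      ((h.diff.cay one_pos h.maps).continuousOn).mono hKΩ
    obtain ⟨r, hr1, hr⟩ : ∃ r < 1, ∀ z ∈ K, ‖cay 1 (φ z)‖ ≤ r := by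
      rcases K.eq_empty_or_nonempty with he | hne
      · exact ⟨0, one_pos, by simp [he]⟩
      · obtain ⟨x, hx, hxm⟩ := hKc.exists_isMaxOn hne hcK.norm
        exact ⟨_, norm_cay_lt one_pos (h.maps (hKΩ hx)), fun z hz => hxm hz⟩
    refine ⟨(r + 1) / 2, by linarith, fun ζ hζ1 hζ2 hζδ => ?_⟩
    by_contra hcon
    have hζb : ζ ∈ ball (0 : ℂ) 1 := by simpa using hζ2
    have hw := hin hζb
    have hwn : ‖cayInv 1 ζ‖ ≤ 2 / δ := by
      rw [cayInv, norm_div, ofReal_one, one_mul, norm_sub_rev]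
      gcongr
      refine (norm_add_le _ _).trans ?_
      rw [norm_one]; linarith
    have hmem : f (cayInv 1 ζ) ∈ K :=
      ⟨⟨subset_closure (hgm hζb), (not_le.1 hcon).le⟩, by simpa using hC _ hw hwn⟩
    have := hr _ hmem
    rw [h.right_inv _ hw, cay_cayInv one_pos hζ2] at this
    linarith
  have hn := norm_cay_lt one_pos (h.maps hz)
  have := eq_poisson_of_vanishing hV (fun ζ hζ => (hpos _ (hgm hζ)).le) hvan hn
  have e0 : cayInv 1 0 = 1 := by simp [cayInv]
  have e1 := re_cayInv (X := 1) hn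
  rw [one_mul] at e1
  rw [← e1, cayInv_cay one_pos (h.maps hz), h.left_inv z hz, e0] at this
  exact this

end

/-- Superlevel sets of a Martin function on a convex domain in the
right half plane, containing the positive real axis and symmetric with respect
to it, are convex. -/
theorem stmt_5 (Ω : Set ℂ) (hΩo : IsOpen Ω) (hΩconv : Convex ℝ Ω)
    (hsub : Ω ⊆ {z : ℂ | 0 < z.re})
    (haxis : ∀ x : ℝ, 0 < x → (x : ℂ) ∈ Ω)
    (hsym : ∀ z : ℂ, z ∈ Ω ↔ (starRingEnd ℂ) z ∈ Ω)
    (u : ℂ → ℝ)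
    (hpos : ∀ z ∈ Ω, 0 < u z)
    (hu2 : ContDiffOn ℝ 2 u Ω)
    (hharm : ∀ z ∈ Ω,
      iteratedFDerivWithin ℝ 2 u Ω z ![(1 : ℂ), (1 : ℂ)]
      + iteratedFDerivWithin ℝ 2 u Ω z ![Complex.I, Complex.I] = 0)
    (hcont : ContinuousOn u (closure Ω))
    (hzero : ∀ z ∈ frontier Ω, u z = 0)
    (c : ℝ) (hc : 0 < c) :
    Convex ℝ {z ∈ Ω | c < u z} := by
  obtain ⟨φ, f, h, hbdd⟩ := exists_chart_bounded hΩo hΩconv hsub haxis hsym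
  have hu := harmonicOnNhd_of_laplacian hΩo hu2 hharm
  have heq : ∀ z ∈ Ω, u z = u (f 1) * (φ z).re := fun z hz =>
    h.eq_mul_re hΩo hbdd hpos hu hcont hzero hz
  have h1 : 0 < u (f 1) :=
    hpos _ (h.maps_inv (show (0 : ℝ) < (1 : ℂ).re by simp))
  rintro x ⟨hx, hxc⟩ y ⟨hy, hyc⟩ a b ha hb hab
  have hmem := hΩconv hx hy ha hb hab
  refine ⟨hmem, ?_⟩
  have hst := h.study hΩconv hx hy ha hb hab
  rw [heq x hx, mul_comm, ← div_lt_iff₀ h1] at hxc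
  rw [heq y hy, mul_comm, ← div_lt_iff₀ h1] at hyc
  rw [heq _ hmem, mul_comm, ← div_lt_iff₀ h1, Complex.real_smul, Complex.real_smul]
  exact (lt_min hxc hyc).trans_le hst
end
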